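/- For every odd n ≥ 5 there exists a fully resolvable CMDRR(3n, n); moreover the resolution consists of 3n full rounds, each containing (3n−1)/2 games and giving byes to exactly one man and one woman, together with one short round containing n games. -/

import Mathlib

open scoped Classical

/-- A mixed doubles game: an unordered pair of teams, each team being a
(man, woman) pair, for `n` men and `n` women indexed by `Fin n`. -/
abbrev Game (n : ℕ) := Sym2 (Fin n × Fin n)

/-- A game is valid if its two teams have distinct men and distinct women. -/
def Game.valid {n : ℕ} (g : Game n) : Prop :=
  ∃ a b : Fin n × Fin n, g = s(a, b) ∧ a.1 ≠ b.1 ∧ a.2 ≠ b.2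

/-- Man `m` plays in game `g`. -/
def Game.manIn {n : ℕ} (m : Fin n) (g : Game n) : Prop :=
  ∃ a b : Fin n × Fin n, g = s(a, b) ∧ a.1 = m

/-- Woman `w` plays in game `g`. -/
def Game.womanIn {n : ℕ} (w : Fin n) (g : Game n) : Prop :=
  ∃ a b : Fin n × Fin n, g = s(a, b) ∧ a.2 = w

/-- Man `m` and woman `w` are partners (teammates) in game `g`. -/
def Game.partners {n : ℕ} (m w : Fin n) (g : Game n) : Prop :=
  (m, w) ∈ g

/-- Man `m` and woman `w` are opponents in game `g` (on different teams). -/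
def Game.opposesMW {n : ℕ} (m w : Fin n) (g : Game n) : Prop :=
  ∃ a b : Fin n × Fin n, g = s(a, b) ∧ a.1 = m ∧ b.2 = w

/-- Men `m` and `m'` are opponents in game `g`. -/
def Game.opposesMM {n : ℕ} (m m' : Fin n) (g : Game n) : Prop :=
  ∃ a b : Fin n × Fin n, g = s(a, b) ∧ a.1 = m ∧ b.1 = m'

/-- Women `w` and `w'` are opponents in game `g`. -/
def Game.opposesWW {n : ℕ} (w w' : Fin n) (g : Game n) : Prop :=
  ∃ a b : Fin n × Fin n, g = s(a, b) ∧ a.2 = w ∧ b.2 = w'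

/-- A complete mixed doubles round robin tournament CMDRR(n,k). -/
structure CMDRR (n k : ℕ) where
  /-- The spouse pairs (man, woman). -/
  spouses : Finset (Fin n × Fin n)
  spouses_card : spouses.card = k
  spouses_inj1 : ∀ p ∈ spouses, ∀ q ∈ spouses, p.1 = q.1 → p = q
  spouses_inj2 : ∀ p ∈ spouses, ∀ q ∈ spouses, p.2 = q.2 → p = q
  /-- The multiset of games. -/
  games : Multiset (Game n)
  valid : ∀ g ∈ games, g.valid
  /-- (i) no game contains both members of a spouse pair. -/
  no_spouse_game : ∀ g ∈ games, ∀ p ∈ spouses, ¬ (Game.manIn p.1 g ∧ Game.womanIn p.2 g)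
  /-- (ii) every non-spouse man-woman pair partners exactly once ... -/
  partners_once : ∀ m w : Fin n, (m, w) ∉ spouses →
    games.countP (Game.partners m w) = 1
  /-- ... and opposes exactly once. -/
  opposesMW_once : ∀ m w : Fin n, (m, w) ∉ spouses →
    games.countP (Game.opposesMW m w) = 1
  /-- (iii) a spoused man opposes every other man exactly once. -/
  spousedM_opposes : ∀ m ∈ spouses.image Prod.fst, ∀ m' : Fin n, m' ≠ m →
    games.countP (Game.opposesMM m m') = 1
  /-- (iii) a spoused woman opposes every other woman exactly once. -/
  spousedW_opposes : ∀ w ∈ spouses.image Prod.snd, ∀ w' : Fin n, w' ≠ w →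
    games.countP (Game.opposesWW w w') = 1
  /-- (iv) an unspoused man opposes exactly one other unspoused man exactly twice,
  and all other men exactly once. -/
  unspousedM_opposes : ∀ m : Fin n, m ∉ spouses.image Prod.fst →
    ∃ m' : Fin n, m' ≠ m ∧ m' ∉ spouses.image Prod.fst ∧
      games.countP (Game.opposesMM m m') = 2 ∧
      ∀ m'' : Fin n, m'' ≠ m → m'' ≠ m' → games.countP (Game.opposesMM m m'') = 1
  /-- (iv) likewise for unspoused women. -/
  unspousedW_opposes : ∀ w : Fin n, w ∉ spouses.image Prod.snd →
    ∃ w' : Fin n, w' ≠ w ∧ w' ∉ spouses.image Prod.snd ∧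
      games.countP (Game.opposesWW w w') = 2 ∧
      ∀ w'' : Fin n, w'' ≠ w → w'' ≠ w' → games.countP (Game.opposesWW w w'') = 1

/-- A round: a multiset of games in which each player appears at most once. -/
def IsRound {n : ℕ} (r : Multiset (Game n)) : Prop :=
  (∀ m : Fin n, r.countP (Game.manIn m) ≤ 1) ∧
  (∀ w : Fin n, r.countP (Game.womanIn w) ≤ 1)

/-- A full round: all players play if `n` is even; all but exactly one man and
one woman play if `n` is odd. -/
def FullRound {n : ℕ} (r : Multiset (Game n)) : Prop :=
  IsRound r ∧
  ((Even n ∧ (∀ m : Fin n, r.countP (Game.manIn m) = 1) ∧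
      (∀ w : Fin n, r.countP (Game.womanIn w) = 1)) ∨
   (¬ Even n ∧ (∃! m : Fin n, r.countP (Game.manIn m) = 0) ∧
      (∃! w : Fin n, r.countP (Game.womanIn w) = 0)))

/-!
A holey self-orthogonal Latin square with symmetric orthogonal mate, here called a frame, is a set
of games in rounds, with men, women and rounds named by the same points: players of different holes
oppose each other exactly once, man and woman of different holes also partner exactly once, players
of the same hole never meet, and everyone plays once in each round that is not in their own hole.

Put the players of `Fin (3 * n)` into `n` holes of size three. Inside each hole play a CMDRR(3,1):
three of its four games go one to each of the three rounds of the hole, where they complete the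
frame's games to a full round, and the fourth goes to the short round.

It remains to find a frame with `n` holes of size three for every odd `n ≠ 3`. Multiplying a frame
by a finite field and filling the enlarged holes, one common hole being added if needed, gives
products; a few small `n` are given by explicit base games. For large `n`, truncate two groups of a
transversal design with seven groups so that its blocks have five, six or seven points, replace each
point by six players and each block by a frame with holes of size six, and fill the groups,
together with one extra hole, by induction.
-/

section Frames

variable {X Y : Type*}

/-- A mixed doubles game with ordered teams `(man₁, woman₁)` and `(man₂, woman₂)` and an assigned
round. Men, women and rounds are all named by points of `X`. -/
@[ext]
structure ScheduledGame (X : Type*) where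
  man₁ : X
  man₂ : X
  woman₁ : X
  woman₂ : X
  round : X
  deriving DecidableEq

namespace ScheduledGame

/-- The same game with its two teams listed in the opposite order. -/
def swap (g : ScheduledGame X) : ScheduledGame X :=
  ⟨g.man₂, g.man₁, g.woman₂, g.woman₁, g.round⟩

/-- The game obtained by renaming players and round along `f`. -/
def map (f : X → Y) (g : ScheduledGame X) : ScheduledGame Y :=
  ⟨f g.man₁, f g.man₂, f g.woman₁, f g.woman₂, f g.round⟩

/-- The six encounters seen from the first team: with the opposing man, the partner, the opposing
woman, between the two women, of the man with the round, and of the woman with the round. -/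
def pairing : Fin 6 → ScheduledGame X → X × X
  | 0, g => (g.man₁, g.man₂)
  | 1, g => (g.man₁, g.woman₁)
  | 2, g => (g.man₁, g.woman₂)
  | 3, g => (g.woman₁, g.woman₂)
  | 4, g => (g.man₁, g.round)
  | 5, g => (g.woman₁, g.round)

theorem pairing_map (k : Fin 6) (f : X → Y) (g : ScheduledGame X) :
    pairing k (g.map f) = Prod.map f f (pairing k g) := by
  fin_cases k <;> rfl

end ScheduledGame

open ScheduledGame

/-- A holey self-orthogonal Latin square with symmetric orthogonal mate on the set of cells where
`R` holds, written as the set of its games: cell `(x, y)` of the square holding `z`, with `w` in the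
transposed cell and `r` in the mate, is the game of man `x` and woman `z` against man `y` and
woman `w` in round `r`. -/
structure IsFrame (R : X → X → Prop) (O : Set (ScheduledGame X)) : Prop where
  swap_mem : ∀ g ∈ O, g.swap ∈ O
  bijOn_pairing : ∀ k, Set.BijOn (pairing k) O {p | R p.1 p.2}

/-- Existence of a frame on the relation `R`. -/
def HasFrame (R : X → X → Prop) : Prop :=
  ∃ O, IsFrame R O

theorem HasFrame.map {S : Y → Y → Prop} (hS : HasFrame S) {φ : Y → X}
    (hφ : Function.Injective φ) : HasFrame (Relation.Map S φ φ) := by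
  obtain ⟨O, hO⟩ := hS
  refine ⟨ScheduledGame.map φ '' O, ?_, fun k => ⟨?_, ?_, ?_⟩⟩
  · rintro _ ⟨a, ha, rfl⟩
    exact ⟨a.swap, hO.swap_mem a ha, rfl⟩
  · rintro _ ⟨a, ha, rfl⟩
    rw [pairing_map]
    exact ⟨_, _, (hO.bijOn_pairing k).mapsTo ha, rfl, rfl⟩
  · rintro _ ⟨a, ha, rfl⟩ _ ⟨b, hb, rfl⟩ hab
    rw [pairing_map, pairing_map] at hab
    rw [(hO.bijOn_pairing k).injOn ha hb (hφ.prodMap hφ hab)]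
  · rintro ⟨_, _⟩ ⟨x, y, hxy, rfl, rfl⟩
    obtain ⟨a, ha, hpair⟩ := (hO.bijOn_pairing k).surjOn (a := (x, y)) hxy
    exact ⟨a.map φ, ⟨a, ha, rfl⟩, by rw [pairing_map, hpair, Prod.map]⟩

theorem HasFrame.transport {S : Y → Y → Prop} (hS : HasFrame S) {R : X → X → Prop} (e : Y ≃ X)
    (hR : ∀ a b, R (e a) (e b) ↔ S a b) : HasFrame R := by
  have hmap : Relation.Map S e e = R := by
    ext x y
    obtain ⟨a, rfl⟩ := e.surjective x
    obtain ⟨b, rfl⟩ := e.surjective y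
    rw [Relation.map_apply_apply e.injective e.injective, hR]
  exact hmap ▸ hS.map e.injective

theorem HasFrame.iUnion {ι : Type*} {S : ι → X → X → Prop} (hS : ∀ i, HasFrame (S i))
    (hdisj : ∀ ⦃i j x y⦄, S i x y → S j x y → i = j) : HasFrame (fun x y => ∃ i, S i x y) := by
  choose O hO using hS
  refine ⟨⋃ i, O i, ?_, fun k => ?_⟩
  · simp only [Set.mem_iUnion]
    exact fun g ⟨i, hg⟩ => ⟨i, (hO i).swap_mem g hg⟩
  · rw [Set.ofPred_exists]
    refine Set.bijOn_iUnion (fun i => (hO i).bijOn_pairing k) fun a ha b hb hab => ?_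
    obtain ⟨i, hi⟩ := Set.mem_iUnion.1 ha
    obtain ⟨j, hj⟩ := Set.mem_iUnion.1 hb
    have hpa := ((hO i).bijOn_pairing k).mapsTo hi
    have hpb := ((hO j).bijOn_pairing k).mapsTo hj
    rw [← hab] at hpb
    obtain rfl := hdisj hpa hpb
    exact ((hO i).bijOn_pairing k).injOn hi hj hab

theorem HasFrame.union {R S : X → X → Prop} (hR : HasFrame R) (hS : HasFrame S)
    (hdisj : ∀ ⦃x y⦄, R x y → ¬ S x y) : HasFrame (fun x y => R x y ∨ S x y) := by
  have h := HasFrame.iUnion (S := fun b : Bool => bif b then R else S)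
    (by rintro (_ | _); exacts [hS, hR])
    (by rintro (_ | _) (_ | _) x y h h' <;> first | rfl | exact (hdisj ‹_› ‹_›).elim)
  simpa [or_comm] using h

theorem HasFrame.prod {R : X → X → Prop} {S : Y → Y → Prop} (hR : HasFrame R)
    (hS : HasFrame S) : HasFrame (fun x y : X × Y => R x.1 y.1 ∧ S x.2 y.2) := by
  obtain ⟨O, hO⟩ := hR
  obtain ⟨O', hO'⟩ := hS
  refine ⟨{g | g.map Prod.fst ∈ O ∧ g.map Prod.snd ∈ O'},
    fun g hg => ⟨hO.swap_mem _ hg.1, hO'.swap_mem _ hg.2⟩, fun k => ⟨?_, ?_, ?_⟩⟩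
  · intro g hg
    have hfst := (hO.bijOn_pairing k).mapsTo hg.1
    have hsnd := (hO'.bijOn_pairing k).mapsTo hg.2
    rw [pairing_map] at hfst hsnd
    exact ⟨hfst, hsnd⟩
  · intro g hg g' hg' h
    have hfst : g.map Prod.fst = g'.map Prod.fst :=
      (hO.bijOn_pairing k).injOn hg.1 hg'.1 (by rw [pairing_map, pairing_map, h])
    have hsnd : g.map Prod.snd = g'.map Prod.snd :=
      (hO'.bijOn_pairing k).injOn hg.2 hg'.2 (by rw [pairing_map, pairing_map, h])
    simp only [ScheduledGame.map, ScheduledGame.mk.injEq] at hfst hsnd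
    ext <;> simp only [hfst, hsnd]
  · rintro ⟨p, q⟩ ⟨hfst, hsnd⟩
    obtain ⟨a, ha, hpa⟩ := (hO.bijOn_pairing k).surjOn (a := (p.1, q.1)) hfst
    obtain ⟨b, hb, hpb⟩ := (hO'.bijOn_pairing k).surjOn (a := (p.2, q.2)) hsnd
    let g : ScheduledGame (X × Y) := ⟨(a.man₁, b.man₁), (a.man₂, b.man₂),
      (a.woman₁, b.woman₁), (a.woman₂, b.woman₂), (a.round, b.round)⟩
    refine ⟨g, ⟨ha, hb⟩, ?_⟩
    have hga : Prod.map Prod.fst Prod.fst (pairing k g) = (p.1, q.1) := by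
      rw [← pairing_map, ← hpa]; rfl
    have hgb : Prod.map Prod.snd Prod.snd (pairing k g) = (p.2, q.2) := by
      rw [← pairing_map, ← hpb]; rfl
    simp only [Prod.map, Prod.mk.injEq] at hga hgb
    ext <;> simp only [hga, hgb]

/-- The game with men `x, y`, women `x + b y, b x + y` and round `x + y`. -/
def linearGame {F : Type*} [Semiring F] (b : F) (p : F × F) : ScheduledGame F :=
  ⟨p.1, p.2, p.1 + b * p.2, b * p.1 + p.2, p.1 + p.2⟩

theorem injective_pairing_linearGame {F : Type*} [Field F] {b : F} (h0 : b ≠ 0) (h1 : b ≠ 1)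
    (hneg : b ≠ -1) (k : Fin 6) : Function.Injective (pairing k ∘ linearGame b) := by
  rintro ⟨x, y⟩ ⟨x', y'⟩ h
  fin_cases k <;>
    simp only [Function.comp_apply, pairing, linearGame, Prod.mk.injEq] at h ⊢ <;> grind

theorem hasFrame_top {F : Type*} [Field F] [Finite F] (hF : 4 ≤ Nat.card F) :
    HasFrame (fun _ _ : F => True) := by
  have := Fintype.ofFinite F
  obtain ⟨b, -, hb⟩ := Finset.exists_mem_notMem_of_card_lt_card (s := {0, 1, -1})
    (t := (Finset.univ : Finset F)) (by
      rw [Finset.card_univ, ← Nat.card_eq_fintype_card]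
      exact Finset.card_le_three.trans_lt hF)
  simp only [Finset.mem_insert, Finset.mem_singleton, not_or] at hb
  refine ⟨Set.range (linearGame b), ?_, fun k => ?_⟩
  · rintro _ ⟨⟨x, y⟩, rfl⟩
    exact ⟨(y, x), by simp only [linearGame, swap, add_comm]⟩
  · have hinj := injective_pairing_linearGame hb.1 hb.2.1 hb.2.2 k
    rw [← Set.image_univ]
    refine ⟨fun _ _ => trivial, hinj.injOn.image_of_comp, fun p _ => ?_⟩
    obtain ⟨q, rfl⟩ := (Finite.injective_iff_bijective.1 hinj).surjective p
    exact ⟨_, ⟨q, trivial, rfl⟩, rfl⟩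

end Frames

section Constructions

variable {X Γ K W : Type*}

/-- Frames whose holes are the sets `{c} × W`. -/
def UniformFrame (K W : Type*) : Prop :=
  HasFrame (fun x y : K × W => x.1 ≠ y.1)

/-- Existence of a frame of type `w ^ k`: it has `k` holes, each with `w` points. -/
def FrameOfType (w k : ℕ) : Prop :=
  UniformFrame (Fin k) (Fin w)

theorem UniformFrame.congr {K' W' : Type*} (e : K ≃ K') (e' : W ≃ W') (h : UniformFrame K W) :
    UniformFrame K' W' :=
  HasFrame.transport h (e.prodCongr e') fun _ _ => e.injective.ne_iff

theorem uniformFrame_iff [Finite K] [Finite W] :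
    UniformFrame K W ↔ FrameOfType (Nat.card W) (Nat.card K) :=
  ⟨.congr (Finite.equivFin K) (Finite.equivFin W),
    .congr (Finite.equivFin K).symm (Finite.equivFin W).symm⟩

theorem exists_sigma_equiv_of_card_fiber [Finite X] (π : X → Γ) (A : Γ → Type*)
    [∀ c, Finite (A c)] (hA : ∀ c, Nat.card {x // π x = c} = Nat.card (A c)) :
    ∃ e : X ≃ Σ c, A c, ∀ x, (e x).1 = π x :=
  ⟨(Equiv.sigmaFiberEquiv π).symm.trans
    (Equiv.sigmaCongrRight fun c => Classical.choice (Finite.card_eq.1 (hA c))), fun _ => rfl⟩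

theorem HasFrame.frameOfType [Finite X] [Finite K] {π : X → K} {w : ℕ}
    (h : HasFrame (fun x y => π x ≠ π y)) (hπ : ∀ c, Nat.card {x // π x = c} = w) :
    FrameOfType w (Nat.card K) := by
  obtain ⟨e, he⟩ := exists_sigma_equiv_of_card_fiber π (fun _ => Fin w) (by simpa using hπ)
  have hframe : UniformFrame K (Fin w) :=
    h.transport (e.trans (Equiv.sigmaEquivProd K (Fin w))) fun x y =>
      not_congr (Eq.congr (he x) (he y))
  simpa using uniformFrame_iff.1 hframe

theorem UniformFrame.restrict {A : Set K} (h : UniformFrame A W) :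
    HasFrame (fun x y : K × W => x.1 ∈ A ∧ y.1 ∈ A ∧ x.1 ≠ y.1) := by
  convert h.map (Subtype.val_injective.prodMap Function.injective_id) using 3 with x y
  constructor
  · exact fun ⟨hx, hy, hne⟩ =>
      ⟨(⟨x.1, hx⟩, x.2), (⟨y.1, hy⟩, y.2), ne_of_apply_ne Subtype.val hne, rfl, rfl⟩
  · rintro ⟨a, b, hne, rfl, rfl⟩
    exact ⟨a.1.2, b.1.2, Subtype.val_injective.ne hne⟩

/-- Wilson's weighting: blocks meeting every group at most once, such that two points of different
groups lie in exactly one block, may be replaced by frames. -/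
theorem hasFrame_of_blocks {P B : Type*} {γ : P → Γ} {A : B → Set P}
    (hγ : ∀ b, (A b).InjOn γ) (hA : ∀ p q, γ p ≠ γ q → ∃! b, p ∈ A b ∧ q ∈ A b)
    (h : ∀ b, UniformFrame (A b) W) : HasFrame (fun x y : P × W => γ x.1 ≠ γ y.1) := by
  convert HasFrame.iUnion (fun b => (h b).restrict) ?_ using 3 with x y
  · refine ⟨fun hxy => ?_, fun ⟨b, hx, hy, hne⟩ => (hγ b).ne hx hy hne⟩
    obtain ⟨b, hb⟩ := (hA _ _ hxy).exists
    exact ⟨b, hb.1, hb.2, ne_of_apply_ne γ hxy⟩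
  · rintro b b' x y ⟨hx, hy, hne⟩ ⟨hx', hy', -⟩
    exact (hA _ _ ((hγ b).ne hx hy hne)).unique ⟨hx, hy⟩ ⟨hx', hy'⟩

theorem HasFrame.fill_sum {P E : Type*} [Subsingleton E] {γ : P → Γ}
    (h : HasFrame (fun x y : P × W => γ x.1 ≠ γ y.1))
    (hfill : ∀ c, UniformFrame ({p // γ p = c} ⊕ E) W) : UniformFrame (P ⊕ E) W := by
  let A (c : Γ) : Set (P ⊕ E) := {k | k.elim (γ · = c) fun _ => True}
  have hA (c : Γ) : UniformFrame (A c) W := (hfill c).congr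
    (Equiv.subtypeSum.trans (.sumCongr (.refl _) (.subtypeUnivEquiv fun _ => trivial))).symm
    (.refl _)
  have hmain := h.map (φ := Prod.map (Sum.inl (β := E)) id)
    (Sum.inl_injective.prodMap Function.injective_id)
  refine (hmain.union (HasFrame.iUnion (fun c => (hA c).restrict) ?_) ?_).transport (.refl _) ?_
  · rintro c c' ⟨p | p, w⟩ ⟨q | q, w'⟩ ⟨hx, hy, hne⟩ ⟨hx', hy', -⟩
    · exact hx.symm.trans hx'
    · exact hx.symm.trans hx'
    · exact hy.symm.trans hy'
    · exact (hne (congrArg Sum.inr (Subsingleton.elim p q))).elim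
  · rintro _ _ ⟨x, y, hne, rfl, rfl⟩ ⟨c, hx, hy, -⟩
    exact hne (hx.trans hy.symm)
  · rintro ⟨p | p, w⟩ ⟨q | q, w'⟩
    · rcases eq_or_ne (γ p) (γ q) with hγ | hγ
      · simp [Relation.Map, A, hγ]
      · simp [Relation.Map, A, hγ, ne_of_apply_ne γ hγ]
    · simp [Relation.Map, A]
    · simp [Relation.Map, A]
    · simp [Relation.Map, A, Subsingleton.elim p q]

theorem HasFrame.fill [Finite X] [Fintype Γ] {π : X → Γ} {m : Γ → ℕ} {w e : ℕ}
    (h : HasFrame (fun x y => π x ≠ π y)) (hπ : ∀ c, Nat.card {x // π x = c} = m c * w)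
    (he : e ≤ 1) (hfill : ∀ c, FrameOfType w (m c + e)) : FrameOfType w (∑ c, m c + e) := by
  have : Subsingleton (Fin e) := Fin.subsingleton_iff_le_one.2 he
  obtain ⟨f, hf⟩ :=
    exists_sigma_equiv_of_card_fiber π (fun c => Fin (m c) × Fin w) (by simpa using hπ)
  have hframe : HasFrame (fun x y : (Σ c, Fin (m c)) × Fin w => x.1.1 ≠ y.1.1) :=
    h.transport (f.trans (Equiv.sigmaProdDistrib (fun c => Fin (m c)) (Fin w)).symm) fun x y =>
      not_congr (Eq.congr (hf x) (hf y))
  have hsum := hframe.fill_sum (E := Fin e) fun c => by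
    have hcard : Nat.card {p : Σ c, Fin (m c) // p.1 = c} = m c := by
      rw [Nat.card_congr (Equiv.sigmaSubtype c), Nat.card_fin]
    rw [uniformFrame_iff, Nat.card_sum, hcard, Nat.card_fin, Nat.card_fin]
    exact hfill c
  simpa [uniformFrame_iff] using hsum

theorem card_subtype_fst (r : K → Prop) :
    Nat.card {x : K × W // r x.1} = Nat.card {a // r a} * Nat.card W := by
  rw [Nat.card_congr Equiv.prodSubtypeFstEquivSubtypeProd, Nat.card_prod]

theorem FrameOfType.fill {k m v e : ℕ} (h : FrameOfType (m * v) k) (he : e ≤ 1)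
    (hfill : FrameOfType v (m + e)) : FrameOfType v (k * m + e) := by
  have hfiber (c : Fin k) : Nat.card {x : Fin k × Fin (m * v) // x.1 = c} = m * v := by
    rw [card_subtype_fst (· = c), Nat.card_unique, one_mul, Nat.card_fin]
  simpa using HasFrame.fill h hfiber he fun _ => hfill

theorem FrameOfType.inflate {w k q : ℕ} (h : FrameOfType w k) (hq : IsPrimePow q) (hq4 : 4 ≤ q) :
    FrameOfType (w * q) k := by
  obtain ⟨p, r, hp, hr, rfl⟩ := hq
  have : Fact p.Prime := ⟨hp.nat_prime⟩
  have hcard := GaloisField.card p r hr.ne'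
  have hprod := h.prod (hasFrame_top (F := GaloisField p r) (hcard ▸ hq4))
  have huniform : UniformFrame (Fin k) (Fin w × GaloisField p r) :=
    hprod.transport (Equiv.prodAssoc _ _ _) fun _ _ => (and_iff_left trivial).symm
  simpa [uniformFrame_iff, hcard] using huniform

section TransversalDesign

variable {R J : Type*} [CommRing R] {c : J → R}

/-- The entry in column `j` of the block `b` of the transversal design over `R` with multipliers
`c`; the blocks form an orthogonal array when the differences of multipliers are units. -/
def blockEntry (c : J → R) (b : R × R) : Option J → R
  | none => b.2
  | some j => b.1 + c j * b.2

theorem existsUnique_blockEntry (hc : Pairwise fun i j => IsUnit (c i - c j)) {i j : Option J}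
    (hij : i ≠ j) (x y : R) : ∃! b, blockEntry c b i = x ∧ blockEntry c b j = y := by
  rcases i with _ | i <;> rcases j with _ | j
  · exact (hij rfl).elim
  · refine ⟨(y - c j * x, x), by simp [blockEntry], ?_⟩
    rintro ⟨a, b⟩ ⟨rfl, rfl⟩
    simp [blockEntry]
  · refine ⟨(x - c i * y, y), by simp [blockEntry], ?_⟩
    rintro ⟨a, b⟩ ⟨rfl, rfl⟩
    simp [blockEntry]
  · obtain ⟨u, hu⟩ := hc (ne_of_apply_ne some hij)
    have hinv := u.inv_mul
    rw [hu] at hinv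
    refine ⟨(x - c i * (↑u⁻¹ * (x - y)), ↑u⁻¹ * (x - y)), ?_, ?_⟩
    · simp only [blockEntry]
      grind
    · rintro ⟨a, b⟩ ⟨hx, hy⟩
      simp only [blockEntry] at hx hy
      grind

theorem hasFrame_of_transversalDesign [Finite J] {T : Option J → Finset R} {w : ℕ}
    (hc : Pairwise fun i j => IsUnit (c i - c j))
    (hblock : ∀ b, FrameOfType w {j | blockEntry c b j ∈ T j}.ncard) :
    HasFrame (fun x y : (Σ j, T j) × Fin w => x.1.1 ≠ y.1.1) := by
  refine hasFrame_of_blocks (γ := Sigma.fst) (A := fun b => {p | blockEntry c b p.1 = p.2})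
    ?_ ?_ fun b => ?_
  · rintro b ⟨i, x, hx⟩ (hbx : _ = x) ⟨j, y, hy⟩ (hby : _ = y) (rfl : i = j)
    simp only [← hbx, ← hby]
  · exact fun p q hpq => existsUnique_blockEntry hc hpq p.2 q.2
  · have e : {p : Σ j, T j // blockEntry c b p.1 = p.2} ≃ {j // blockEntry c b j ∈ T j} :=
      { toFun := fun p => ⟨p.1.1, by rw [p.2]; exact p.1.2.2⟩
        invFun := fun j => ⟨⟨j, ⟨_, j.2⟩⟩, rfl⟩
        left_inv := by
          rintro ⟨⟨j, x, hx⟩, h⟩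
          exact Subtype.ext (Sigma.ext rfl (heq_of_eq (Subtype.ext h)))
        right_inv := fun _ => rfl }
    refine UniformFrame.congr e.symm (.refl _) (uniformFrame_iff.2 ?_)
    rw [Nat.card_fin]
    exact hblock b

theorem frameOfType_of_transversalDesign [Finite R] [Fintype J]
    (hc : Pairwise fun i j => IsUnit (c i - c j)) {T : Option J → Finset R} {m : Option J → ℕ}
    {v w e : ℕ} (hblock : ∀ b, FrameOfType w {j | blockEntry c b j ∈ T j}.ncard)
    (hm : ∀ j, (T j).card * w = m j * v) (he : e ≤ 1) (hfill : ∀ j, FrameOfType v (m j + e)) :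
    FrameOfType v (∑ j, m j + e) := by
  refine (hasFrame_of_transversalDesign hc hblock).fill (fun j => ?_) he hfill
  rw [card_subtype_fst (fun p : Σ j, T j => p.1 = j), Nat.card_congr (Equiv.sigmaSubtype j),
    Nat.card_fin, Nat.card_eq_finsetCard, hm]

/-- A block still meets every group that is kept in full, which bounds its truncated size from
below. -/
theorem frameOfType_of_truncation [Fintype R] [Fintype J]
    (hc : Pairwise fun i j => IsUnit (c i - c j)) {size : Option J → ℕ} {v d e : ℕ}
    (hsize : ∀ j, size j ≤ Fintype.card R)
    (hblock : ∀ s, {j | size j = Fintype.card R}.ncard ≤ s → s ≤ Fintype.card J + 1 →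
      FrameOfType (d * v) s)
    (he : e ≤ 1) (hfill : ∀ j, FrameOfType v (d * size j + e)) :
    FrameOfType v (d * ∑ j, size j + e) := by
  choose T _ hT using fun j => Finset.exists_subset_card_eq (s := (.univ : Finset R)) (hsize j)
  rw [Finset.mul_sum]
  refine frameOfType_of_transversalDesign hc (T := T) (fun b => hblock _ ?_ ?_)
    (fun j => by rw [hT]; ring) he hfill
  · refine Set.ncard_le_ncard fun j hj => ?_
    rw [Set.mem_ofPred_eq, ← hT, Finset.card_eq_iff_eq_univ] at hj
    rw [Set.mem_ofPred_eq, hj]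
    exact Finset.mem_univ _
  · exact (Set.ncard_le_card _).trans_eq (Nat.card_eq_fintype_card.trans Fintype.card_option)

end TransversalDesign

end Constructions

section Certificates

open ScheduledGame

/-- Whether the numbers in the list are distinct and none is the position of a set bit of `seen`. -/
def noRepeat : List ℕ → ℕ → Bool
  | [], _ => true
  | a :: l, seen => !seen.testBit a && noRepeat l (seen ||| 1 <<< a)

theorem nodup_of_noRepeat {l : List ℕ} {seen : ℕ} (h : noRepeat l seen) :
    l.Nodup ∧ ∀ a ∈ l, seen.testBit a = false := by
  induction l generalizing seen with
  | nil => simp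
  | cons a l ih =>
    simp only [noRepeat, Bool.and_eq_true, Bool.not_eq_eq_eq_not, Bool.not_true] at h
    obtain ⟨hnodup, hseen⟩ := ih h.2
    simp only [Nat.testBit_or, Bool.or_eq_false_iff] at hseen
    refine ⟨List.nodup_cons.2 ⟨fun ha => ?_, hnodup⟩, ?_⟩
    · simpa [Nat.testBit_shiftLeft] using (hseen a ha).2
    · exact List.forall_mem_cons.2 ⟨h.1, fun b hb => (hseen b hb).1⟩

theorem bijOn_of_nodup_map {α β : Type*} {f : α → β} {l : List α} {D : Set β} [Finite D]
    (hnodup : (l.map f).Nodup) (hD : ∀ a ∈ l, f a ∈ D) (hcard : D.ncard ≤ l.length) :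
    Set.BijOn f {a | a ∈ l} D := by
  have hinj : Set.InjOn f {a | a ∈ l} := List.inj_on_of_nodup_map hnodup
  have himage : f '' {a | a ∈ l} ⊆ D := Set.image_subset_iff.2 hD
  refine ⟨hD, hinj, (Set.eq_of_subset_of_ncard_le himage ?_).ge⟩
  rwa [hinj.ncard_image, ← List.coe_toFinset, Set.ncard_coe_finset,
    List.toFinset_card_of_nodup hnodup.of_map]

/-- Whether all pairings of the games in the list satisfy `cell` and, for each kind of pairing,
their codes are distinct. -/
def checkPairings (code : ℕ × ℕ → ℕ) (cell : ℕ × ℕ → Bool) (L : List (ScheduledGame ℕ)) : Bool :=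
  (List.finRange 6).all fun k =>
    noRepeat (L.map (code ∘ pairing k)) 0 && L.all (cell ∘ pairing k)

theorem bijOn_of_checkPairings {X β : Type*} {name : ℕ → X} {d : X × X → β} {enc : β → ℕ}
    {D : Set β} [Finite D] {code : ℕ × ℕ → ℕ} {cell : ℕ × ℕ → Bool} {L : List (ScheduledGame ℕ)}
    (hcheck : checkPairings code cell L) (hcode : ∀ p, enc (d (p.map name name)) = code p)
    (hcell : ∀ p, cell p → d (p.map name name) ∈ D) (hcard : D.ncard ≤ L.length) (k : Fin 6) :
    Set.BijOn (d ∘ pairing k) {g | g ∈ L.map (ScheduledGame.map name)} D := by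
  simp only [checkPairings, List.all_eq_true, Bool.and_eq_true] at hcheck
  obtain ⟨hrepeat, hcells⟩ := hcheck k (List.mem_finRange k)
  refine bijOn_of_nodup_map (.of_map enc ?_) ?_ (by rwa [List.length_map])
  · convert (nodup_of_noRepeat hrepeat).1 using 1
    simp only [List.map_map]
    exact List.map_congr_left fun g _ => by
      simp only [Function.comp_apply, pairing_map, hcode]
  · simp only [List.forall_mem_map, Function.comp_apply, pairing_map]
    exact fun g hg => hcell _ (hcells g hg)

/-- The games of a list, each with its teams in both orders. -/
def withSwaps {X : Type*} (L : List (ScheduledGame X)) : List (ScheduledGame X) :=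
  L ++ L.map swap

theorem swap_mem_map_withSwaps {X Y : Type*} {L : List (ScheduledGame X)} {name : X → Y}
    {g : ScheduledGame Y} (hg : g ∈ (withSwaps L).map (ScheduledGame.map name)) :
    g.swap ∈ (withSwaps L).map (ScheduledGame.map name) := by
  obtain ⟨a, ha, rfl⟩ := List.mem_map.1 hg
  refine List.mem_map.2 ⟨a.swap, ?_, rfl⟩
  rcases List.mem_append.1 ha with h | h
  · exact List.mem_append_right _ (List.mem_map_of_mem h)
  · obtain ⟨b, hb, rfl⟩ := List.mem_map.1 h
    exact List.mem_append_left _ hb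

theorem hasFrame_of_differences {G : Type*} [AddCommGroup G] {B : Set (ScheduledGame G)}
    {D : Set G} (hswap : ∀ g ∈ B, g.swap ∈ B)
    (hB : ∀ k, Set.BijOn ((fun p => p.2 - p.1) ∘ pairing k) B D) :
    HasFrame (fun x y => y - x ∈ D) := by
  refine ⟨{g | ∃ b ∈ B, ∃ t, b.map (t + ·) = g}, ?_, fun k => ⟨?_, ?_, ?_⟩⟩
  · rintro _ ⟨b, hb, t, rfl⟩
    exact ⟨b.swap, hswap b hb, t, rfl⟩
  · rintro _ ⟨b, hb, t, rfl⟩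
    simpa [pairing_map] using (hB k).mapsTo hb
  · rintro _ ⟨b, hb, t, rfl⟩ _ ⟨b', hb', t', rfl⟩ h
    simp only [pairing_map, Prod.map, Prod.mk.injEq] at h
    have hdiff : (pairing k b).2 - (pairing k b).1 = (pairing k b').2 - (pairing k b').1 := by
      rw [← add_sub_add_left_eq_sub _ _ t, h.1, h.2, add_sub_add_left_eq_sub]
    obtain rfl := (hB k).injOn hb hb' hdiff
    rw [add_right_cancel h.1]
  · rintro ⟨x, y⟩ hxy
    obtain ⟨b, hb, hdiff⟩ := (hB k).surjOn hxy
    refine ⟨_, ⟨b, hb, x - (pairing k b).1, rfl⟩, ?_⟩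
    rw [pairing_map]
    refine Prod.ext (sub_add_cancel _ _) ?_
    simp only [Function.comp_apply] at hdiff
    simp only [Prod.map, sub_add, ← neg_sub (pairing k b).2, hdiff]
    abel

/-- The images of the seeds under multiplication by `u ^ i` for `i < t`. -/
def orbitList (u t : ℕ) (seeds : List (ScheduledGame ℕ)) : List (ScheduledGame ℕ) :=
  (List.range t).flatMap fun i => seeds.map (ScheduledGame.map (u ^ i * ·))

/-- Whether the seeds, multiplied by powers of `u` and taken in both orientations, are base games
modulo `k * w` whose differences of each kind run over the residues not divisible by `k`. -/
def checkCyclic (k w u t : ℕ) (seeds : List (ScheduledGame ℕ)) : Bool :=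
  let L := withSwaps (orbitList u t seeds)
  decide (k * w - w ≤ L.length) &&
    checkPairings (fun p => (p.2 + (k * w - 1) * p.1) % (k * w))
      (fun p => (p.2 + (k * w - 1) * p.1) % k != 0) L

theorem card_fiber_mul_card {G H : Type*} [AddGroup G] [AddGroup H] {f : G →+ H}
    (hf : Function.Surjective f) (c : H) : Nat.card {x // f x = c} * Nat.card H = Nat.card G := by
  rw [← f.ker.card_mul_index, AddSubgroup.index_ker, AddMonoidHom.range_eq_top.2 hf,
    Nat.card_congr AddSubgroup.topEquiv.toEquiv]
  exact congrArg (· * _) (Nat.card_congr (AddMonoidHom.fiberEquivKerOfSurjective hf c))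

theorem frameOfType_of_checkCyclic {k w u t : ℕ} [NeZero k] [NeZero w]
    {seeds : List (ScheduledGame ℕ)} (h : checkCyclic k w u t seeds) : FrameOfType w k := by
  simp only [checkCyclic, Bool.and_eq_true, decide_eq_true_eq] at h
  obtain ⟨hlength, hcheck⟩ := h
  let π : ZMod (k * w) →+* ZMod k := ZMod.castHom (dvd_mul_right k w) (ZMod k)
  have hfiber (c : ZMod k) : Nat.card {x // π x = c} = w := by
    have h := card_fiber_mul_card (f := π.toAddMonoidHom) (ZMod.ringHom_surjective π) c
    rw [Nat.card_zmod, Nat.card_zmod, mul_comm] at h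
    exact Nat.eq_of_mul_eq_mul_left (Nat.pos_of_neZero k) h
  have hcard : {z | π z ≠ 0}.ncard = k * w - w := by
    rw [← Set.compl_ofPred, Set.ncard_compl, Nat.card_zmod]
    exact congrArg _ (hfiber 0)
  have hsub (p : ℕ × ℕ) : (p.2 : ZMod (k * w)) - p.1 = (p.2 + (k * w - 1) * p.1 : ℕ) := by
    rw [Nat.cast_add, Nat.cast_mul, Nat.cast_pred (Nat.pos_of_neZero _), ZMod.natCast_self]
    ring
  have hframe : HasFrame (fun x y => y - x ∈ {z | π z ≠ 0}) := by
    refine hasFrame_of_differences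
      (B := {g | g ∈ (withSwaps (orbitList u t seeds)).map (ScheduledGame.map Nat.cast)})
      (fun _ => swap_mem_map_withSwaps)
      (bijOn_of_checkPairings (enc := ZMod.val) hcheck ?_ ?_ (hcard.trans_le hlength))
    · intro p
      simp only [Prod.map, hsub, ZMod.val_natCast]
    · intro p hp
      simp only [Prod.map, hsub]
      rw [Set.mem_ofPred_eq, map_natCast, Ne, ZMod.natCast_eq_zero_iff, Nat.dvd_iff_mod_eq_zero]
      simpa using hp
  rw [← Nat.card_zmod k]
  refine HasFrame.frameOfType (π := π) ?_ hfiber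
  convert hframe using 3
  rw [Set.mem_ofPred_eq, map_sub, sub_ne_zero, ne_comm]

/-- Whether the games, taken in both orientations, exhaust the pairs of points modulo `k * w` lying
in different holes `{i * w, …, i * w + w - 1}`. -/
def checkDirect (k w : ℕ) (games : List (ScheduledGame ℕ)) : Bool :=
  let L := withSwaps games
  decide ((k * k - k) * (w * w) ≤ L.length) &&
    checkPairings (fun p => p.1 % (k * w) * (k * w) + p.2 % (k * w))
      (fun p => p.1 % (k * w) / w != p.2 % (k * w) / w) L

theorem ncard_fst_ne_fst {K W : Type*} [Finite K] :
    {p : (K × W) × K × W | p.1.1 ≠ p.2.1}.ncard =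
      (Nat.card K * Nat.card K - Nat.card K) * (Nat.card W * Nat.card W) := by
  have := Fintype.ofFinite K
  calc {p : (K × W) × K × W | p.1.1 ≠ p.2.1}.ncard
      = {q : (K × K) × W × W | q.1.1 ≠ q.1.2}.ncard :=
        Nat.card_congr ((Equiv.prodProdProdComm K W K W).subtypeEquiv fun _ => Iff.rfl)
    _ = (Finset.univ.offDiag : Finset (K × K)).card * (Nat.card W * Nat.card W) := by
        rw [← Nat.card_coe_set_eq]
        refine (card_subtype_fst (fun q : K × K => q.1 ≠ q.2)).trans ?_
        rw [Nat.card_prod, Nat.subtype_card]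
        simp
    _ = _ := by rw [Finset.offDiag_card, Finset.card_univ, ← Nat.card_eq_fintype_card]

theorem frameOfType_of_checkDirect {k w : ℕ} [NeZero k] [NeZero w]
    {games : List (ScheduledGame ℕ)} (h : checkDirect k w games) : FrameOfType w k := by
  simp only [checkDirect, Bool.and_eq_true, decide_eq_true_eq] at h
  obtain ⟨hlength, hcheck⟩ := h
  let name (x : ℕ) : Fin k × Fin w := finProdFinEquiv.symm (Fin.ofNat (k * w) x)
  let enc (p : (Fin k × Fin w) × Fin k × Fin w) : ℕ :=
    finProdFinEquiv p.1 * (k * w) + finProdFinEquiv p.2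
  refine ⟨{g | g ∈ (withSwaps games).map (ScheduledGame.map name)},
    fun _ => swap_mem_map_withSwaps,
    bijOn_of_checkPairings (d := id) (enc := enc) hcheck (fun p => ?_) (fun p hp => ?_) ?_⟩
  · simp only [id, enc, name, Prod.map, Equiv.apply_symm_apply, Fin.val_ofNat]
  · simpa [name, Fin.ext_iff] using hp
  · refine ncard_fst_ne_fst.trans_le ?_
    simpa only [Nat.card_fin] using hlength

/-- The images of the games under the powers of the permutation of order `p` that adds `M` modulo
`p * M` to the points below `p * M` and fixes the others. -/
def develop (M p : ℕ) (games : List (ScheduledGame ℕ)) : List (ScheduledGame ℕ) :=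
  (List.range p).flatMap fun i =>
    games.map (ScheduledGame.map fun x => if x < p * M then (x + i * M) % (p * M) else x)

theorem frameOfType_3_5 : FrameOfType 3 5 :=
  frameOfType_of_checkCyclic (u := 1) (t := 1) (seeds := [
    ⟨0, 1, 4, 8, 2⟩, ⟨0, 2, 6, 13, 14⟩, ⟨0, 3, 12, 6, 9⟩, ⟨0, 4, 1, 2, 8⟩, ⟨0, 6, 2, 14, 13⟩,
    ⟨0, 7, 14, 1, 3⟩])
    (by decide +kernel)

theorem frameOfType_3_7 : FrameOfType 3 7 :=
  frameOfType_of_checkCyclic (u := 1) (t := 1) (seeds := [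
    ⟨0, 1, 3, 20, 19⟩, ⟨0, 2, 11, 3, 13⟩, ⟨0, 3, 9, 15, 12⟩, ⟨0, 4, 5, 10, 6⟩, ⟨0, 5, 17, 18, 1⟩,
    ⟨0, 6, 4, 16, 10⟩, ⟨0, 8, 16, 5, 3⟩, ⟨0, 9, 20, 17, 8⟩, ⟨0, 10, 2, 4, 15⟩])
    (by decide +kernel)

theorem frameOfType_3_9 : FrameOfType 3 9 :=
  frameOfType_of_checkCyclic (u := 1) (t := 1) (seeds := [
    ⟨0, 1, 6, 3, 2⟩, ⟨0, 2, 26, 7, 15⟩, ⟨0, 3, 14, 1, 11⟩, ⟨0, 4, 3, 20, 24⟩, ⟨0, 5, 7, 22, 12⟩,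
    ⟨0, 6, 19, 17, 4⟩, ⟨0, 7, 23, 19, 26⟩, ⟨0, 8, 20, 21, 22⟩, ⟨0, 10, 8, 14, 6⟩,
    ⟨0, 11, 15, 8, 21⟩, ⟨0, 12, 22, 6, 17⟩, ⟨0, 13, 1, 23, 16⟩])
    (by decide +kernel)

theorem frameOfType_3_11 : FrameOfType 3 11 :=
  frameOfType_of_checkCyclic (u := 1) (t := 1) (seeds := [
    ⟨0, 1, 24, 31, 25⟩, ⟨0, 2, 16, 21, 7⟩, ⟨0, 3, 4, 10, 18⟩, ⟨0, 4, 10, 18, 30⟩,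
    ⟨0, 5, 29, 28, 32⟩, ⟨0, 6, 31, 19, 14⟩, ⟨0, 7, 1, 15, 3⟩, ⟨0, 8, 15, 2, 20⟩,
    ⟨0, 9, 12, 30, 10⟩, ⟨0, 10, 9, 13, 19⟩, ⟨0, 12, 5, 29, 28⟩, ⟨0, 13, 25, 8, 17⟩,
    ⟨0, 14, 18, 20, 2⟩, ⟨0, 15, 20, 17, 13⟩, ⟨0, 16, 32, 9, 6⟩])
    (by decide +kernel)

theorem frameOfType_3_13 : FrameOfType 3 13 :=
  frameOfType_of_checkCyclic (u := 4) (t := 3) (seeds := [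
    ⟨0, 1, 30, 5, 35⟩, ⟨0, 25, 9, 8, 17⟩, ⟨0, 2, 5, 25, 11⟩, ⟨0, 11, 8, 1, 2⟩, ⟨0, 3, 31, 37, 21⟩,
    ⟨0, 6, 21, 24, 16⟩])
    (by decide +kernel)

theorem frameOfType_3_15 : FrameOfType 3 15 :=
  frameOfType_of_checkCyclic (u := 1) (t := 1) (seeds := [
    ⟨0, 1, 8, 10, 5⟩, ⟨0, 2, 19, 31, 9⟩, ⟨0, 3, 2, 25, 16⟩, ⟨0, 4, 24, 29, 35⟩,
    ⟨0, 5, 27, 40, 32⟩, ⟨0, 6, 39, 5, 43⟩, ⟨0, 7, 41, 12, 29⟩, ⟨0, 8, 21, 14, 10⟩,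
    ⟨0, 9, 17, 41, 3⟩, ⟨0, 10, 4, 3, 28⟩, ⟨0, 11, 34, 6, 8⟩, ⟨0, 12, 23, 4, 26⟩,
    ⟨0, 13, 31, 27, 25⟩, ⟨0, 14, 1, 21, 33⟩, ⟨0, 16, 13, 19, 40⟩, ⟨0, 17, 43, 35, 6⟩,
    ⟨0, 18, 42, 28, 41⟩, ⟨0, 19, 11, 2, 20⟩, ⟨0, 20, 36, 1, 11⟩, ⟨0, 21, 12, 9, 38⟩,
    ⟨0, 22, 20, 38, 21⟩])
    (by decide +kernel)

theorem frameOfType_3_17 : FrameOfType 3 17 :=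
  frameOfType_of_checkCyclic (u := 19) (t := 4) (seeds := [
    ⟨0, 1, 43, 45, 46⟩, ⟨0, 16, 25, 6, 22⟩, ⟨0, 3, 8, 29, 44⟩, ⟨0, 5, 6, 35, 43⟩,
    ⟨0, 29, 45, 50, 25⟩, ⟨0, 9, 40, 37, 30⟩])
    (by decide +kernel)

theorem frameOfType_3_19 : FrameOfType 3 19 :=
  frameOfType_of_checkCyclic (u := 46) (t := 3) (seeds := [
    ⟨0, 1, 27, 55, 6⟩, ⟨0, 37, 30, 40, 51⟩, ⟨0, 2, 11, 31, 29⟩, ⟨0, 17, 8, 7, 47⟩,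
    ⟨0, 3, 42, 18, 49⟩, ⟨0, 4, 25, 41, 54⟩, ⟨0, 34, 13, 35, 3⟩, ⟨0, 6, 16, 28, 22⟩,
    ⟨0, 12, 41, 47, 25⟩])
    (by decide +kernel)

theorem frameOfType_3_23 : FrameOfType 3 23 :=
  frameOfType_of_checkCyclic (u := 1) (t := 1) (seeds := [
    ⟨0, 1, 45, 16, 43⟩, ⟨0, 2, 58, 33, 66⟩, ⟨0, 3, 65, 53, 59⟩, ⟨0, 4, 43, 29, 13⟩,
    ⟨0, 5, 36, 43, 24⟩, ⟨0, 6, 47, 5, 26⟩, ⟨0, 7, 52, 11, 37⟩, ⟨0, 8, 20, 67, 33⟩,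
    ⟨0, 9, 28, 4, 62⟩, ⟨0, 10, 16, 65, 18⟩, ⟨0, 11, 14, 22, 17⟩, ⟨0, 12, 21, 60, 52⟩,
    ⟨0, 13, 7, 50, 51⟩, ⟨0, 14, 13, 26, 58⟩, ⟨0, 15, 66, 18, 65⟩, ⟨0, 16, 40, 35, 55⟩,
    ⟨0, 17, 30, 34, 16⟩, ⟨0, 18, 60, 27, 32⟩, ⟨0, 19, 49, 17, 10⟩, ⟨0, 20, 6, 64, 35⟩,
    ⟨0, 21, 42, 48, 22⟩, ⟨0, 22, 24, 7, 49⟩, ⟨0, 24, 62, 8, 12⟩, ⟨0, 25, 61, 59, 28⟩,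
    ⟨0, 26, 63, 28, 11⟩, ⟨0, 27, 41, 32, 48⟩, ⟨0, 28, 8, 61, 4⟩, ⟨0, 29, 39, 58, 7⟩,
    ⟨0, 30, 1, 52, 61⟩, ⟨0, 31, 56, 57, 67⟩, ⟨0, 32, 10, 20, 34⟩, ⟨0, 33, 18, 15, 5⟩,
    ⟨0, 34, 35, 66, 63⟩])
    (by decide +kernel)

theorem frameOfType_3_31 : FrameOfType 3 31 :=
  frameOfType_of_checkCyclic (u := 58) (t := 5) (seeds := [
    ⟨0, 1, 75, 7, 85⟩, ⟨0, 61, 18, 55, 70⟩, ⟨0, 3, 29, 5, 48⟩, ⟨0, 5, 14, 46, 52⟩,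
    ⟨0, 26, 17, 16, 10⟩, ⟨0, 7, 85, 2, 86⟩, ⟨0, 55, 70, 29, 38⟩, ⟨0, 9, 33, 69, 20⟩,
    ⟨0, 15, 55, 22, 54⟩])
    (by decide +kernel)

theorem frameOfType_3_39 : FrameOfType 3 39 :=
  frameOfType_of_checkCyclic (u := 16) (t := 3) (seeds := [
    ⟨0, 1, 32, 111, 104⟩, ⟨0, 2, 65, 55, 116⟩, ⟨0, 3, 51, 45, 22⟩, ⟨0, 4, 37, 32, 64⟩,
    ⟨0, 5, 103, 6, 97⟩, ⟨0, 6, 96, 14, 82⟩, ⟨0, 8, 21, 83, 106⟩, ⟨0, 9, 35, 82, 94⟩,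
    ⟨0, 10, 72, 68, 52⟩, ⟨0, 12, 55, 64, 3⟩, ⟨0, 13, 70, 58, 99⟩, ⟨0, 17, 14, 73, 61⟩,
    ⟨0, 18, 98, 101, 77⟩, ⟨0, 19, 95, 23, 12⟩, ⟨0, 20, 79, 113, 29⟩, ⟨0, 24, 25, 27, 45⟩,
    ⟨0, 25, 20, 42, 15⟩, ⟨0, 34, 46, 70, 71⟩, ⟨0, 40, 9, 100, 57⟩])
    (by decide +kernel)

theorem frameOfType_3_43 : FrameOfType 3 43 :=
  frameOfType_of_checkCyclic (u := 70) (t := 7) (seeds := [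
    ⟨0, 1, 94, 63, 66⟩, ⟨0, 85, 121, 66, 63⟩, ⟨0, 3, 122, 53, 23⟩, ⟨0, 5, 55, 107, 60⟩,
    ⟨0, 38, 31, 65, 69⟩, ⟨0, 7, 59, 37, 84⟩, ⟨0, 79, 113, 49, 45⟩, ⟨0, 9, 73, 22, 112⟩,
    ⟨0, 21, 63, 87, 118⟩])
    (by decide +kernel)

theorem frameOfType_3_47 : FrameOfType 3 47 :=
  frameOfType_of_checkCyclic (u := 1) (t := 1) (seeds := [
    ⟨0, 1, 24, 119, 70⟩, ⟨0, 2, 46, 95, 3⟩, ⟨0, 3, 28, 22, 25⟩, ⟨0, 4, 96, 53, 139⟩,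
    ⟨0, 5, 115, 26, 78⟩, ⟨0, 6, 91, 103, 50⟩, ⟨0, 7, 74, 114, 128⟩, ⟨0, 8, 43, 98, 12⟩,
    ⟨0, 9, 131, 113, 122⟩, ⟨0, 10, 99, 62, 136⟩, ⟨0, 11, 112, 29, 87⟩, ⟨0, 12, 88, 112, 53⟩,
    ⟨0, 13, 77, 111, 137⟩, ⟨0, 14, 68, 7, 40⟩, ⟨0, 15, 16, 46, 125⟩, ⟨0, 16, 8, 39, 71⟩,
    ⟨0, 17, 2, 79, 109⟩, ⟨0, 18, 27, 132, 9⟩, ⟨0, 19, 80, 108, 5⟩, ⟨0, 20, 37, 104, 30⟩,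
    ⟨0, 21, 102, 60, 81⟩, ⟨0, 22, 105, 80, 130⟩, ⟨0, 23, 11, 82, 106⟩, ⟨0, 24, 82, 130, 59⟩,
    ⟨0, 25, 36, 14, 58⟩, ⟨0, 26, 34, 107, 39⟩, ⟨0, 27, 111, 57, 84⟩, ⟨0, 28, 14, 33, 89⟩,
    ⟨0, 29, 103, 38, 114⟩, ⟨0, 30, 79, 139, 62⟩, ⟨0, 31, 86, 102, 23⟩, ⟨0, 32, 95, 16, 31⟩,
    ⟨0, 33, 7, 73, 134⟩, ⟨0, 34, 17, 30, 98⟩, ⟨0, 35, 29, 88, 100⟩, ⟨0, 36, 54, 123, 18⟩,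
    ⟨0, 37, 42, 32, 52⟩, ⟨0, 38, 75, 19, 104⟩, ⟨0, 39, 129, 51, 90⟩, ⟨0, 40, 20, 27, 107⟩,
    ⟨0, 41, 38, 91, 97⟩, ⟨0, 42, 63, 120, 21⟩, ⟨0, 43, 45, 41, 49⟩, ⟨0, 44, 119, 69, 19⟩,
    ⟨0, 45, 138, 48, 93⟩, ⟨0, 46, 117, 116, 118⟩, ⟨0, 48, 72, 117, 24⟩, ⟨0, 49, 48, 50, 46⟩,
    ⟨0, 50, 116, 72, 28⟩, ⟨0, 51, 6, 45, 96⟩, ⟨0, 52, 120, 125, 115⟩, ⟨0, 53, 56, 97, 91⟩,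
    ⟨0, 54, 67, 34, 74⟩, ⟨0, 55, 51, 59, 43⟩, ⟨0, 56, 66, 28, 131⟩, ⟨0, 57, 15, 42, 99⟩,
    ⟨0, 58, 123, 134, 112⟩, ⟨0, 59, 65, 100, 88⟩, ⟨0, 60, 64, 43, 77⟩, ⟨0, 61, 101, 87, 68⟩,
    ⟨0, 62, 140, 31, 16⟩, ⟨0, 63, 133, 118, 8⟩, ⟨0, 64, 32, 15, 2⟩, ⟨0, 65, 85, 56, 27⟩,
    ⟨0, 66, 61, 52, 80⟩, ⟨0, 67, 57, 77, 37⟩, ⟨0, 68, 13, 128, 102⟩, ⟨0, 69, 33, 36, 105⟩,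
    ⟨0, 70, 35, 12, 11⟩])
    (by decide +kernel)

theorem frameOfType_3_67 : FrameOfType 3 67 :=
  frameOfType_of_checkCyclic (u := 142) (t := 11) (seeds := [
    ⟨0, 1, 147, 119, 106⟩, ⟨0, 133, 54, 149, 28⟩, ⟨0, 2, 138, 127, 94⟩, ⟨0, 65, 63, 7, 40⟩,
    ⟨0, 3, 83, 188, 35⟩, ⟨0, 4, 172, 30, 83⟩, ⟨0, 130, 163, 171, 185⟩, ⟨0, 6, 148, 193, 3⟩,
    ⟨0, 12, 198, 15, 6⟩])
    (by decide +kernel)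

theorem frameOfType_6_5 : FrameOfType 6 5 :=
  frameOfType_of_checkCyclic (u := 1) (t := 1) (seeds := [
    ⟨0, 1, 17, 4, 18⟩, ⟨0, 2, 24, 18, 21⟩, ⟨0, 3, 11, 29, 27⟩, ⟨0, 4, 21, 12, 8⟩, ⟨0, 6, 7, 3, 9⟩,
    ⟨0, 7, 4, 6, 13⟩, ⟨0, 8, 19, 26, 7⟩, ⟨0, 9, 23, 7, 1⟩, ⟨0, 11, 2, 24, 23⟩,
    ⟨0, 12, 14, 13, 26⟩, ⟨0, 13, 22, 19, 11⟩, ⟨0, 14, 12, 23, 16⟩])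
    (by decide +kernel)

theorem frameOfType_2_7 : FrameOfType 2 7 :=
  frameOfType_of_checkDirect (games := develop 2 7 [
    ⟨0, 2, 5, 12, 11⟩, ⟨0, 3, 7, 11, 4⟩, ⟨0, 4, 9, 10, 7⟩, ⟨0, 5, 13, 7, 8⟩, ⟨0, 6, 12, 9, 5⟩,
    ⟨0, 7, 2, 4, 12⟩, ⟨0, 9, 11, 13, 2⟩, ⟨0, 11, 8, 2, 6⟩, ⟨0, 13, 4, 8, 10⟩, ⟨1, 3, 4, 13, 7⟩,
    ⟨1, 5, 8, 11, 13⟩, ⟨1, 7, 13, 8, 3⟩])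
    (by decide +kernel)

theorem frameOfType_6_6 : FrameOfType 6 6 :=
  frameOfType_of_checkDirect (games := develop 6 5 [
    ⟨0, 6, 16, 28, 20⟩, ⟨0, 7, 20, 17, 32⟩, ⟨0, 8, 31, 15, 19⟩, ⟨0, 9, 32, 25, 15⟩,
    ⟨0, 10, 25, 30, 23⟩, ⟨0, 11, 28, 13, 35⟩, ⟨0, 12, 21, 27, 9⟩, ⟨0, 13, 23, 24, 10⟩,
    ⟨0, 14, 34, 8, 26⟩, ⟨0, 15, 11, 18, 30⟩, ⟨0, 16, 6, 35, 18⟩, ⟨0, 17, 18, 33, 24⟩,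
    ⟨0, 19, 17, 6, 28⟩, ⟨0, 20, 35, 26, 8⟩, ⟨0, 21, 29, 12, 31⟩, ⟨0, 22, 24, 34, 12⟩,
    ⟨0, 23, 12, 32, 6⟩, ⟨0, 25, 14, 23, 33⟩, ⟨0, 26, 30, 21, 13⟩, ⟨0, 27, 33, 7, 21⟩,
    ⟨0, 28, 7, 31, 17⟩, ⟨0, 29, 10, 19, 34⟩, ⟨0, 30, 9, 20, 25⟩, ⟨0, 31, 27, 14, 7⟩,
    ⟨0, 32, 8, 22, 29⟩, ⟨0, 33, 26, 16, 11⟩, ⟨0, 34, 19, 11, 16⟩, ⟨0, 35, 13, 29, 22⟩,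
    ⟨1, 7, 13, 25, 21⟩, ⟨1, 8, 27, 12, 34⟩, ⟨1, 9, 30, 16, 18⟩, ⟨1, 10, 17, 33, 25⟩,
    ⟨1, 11, 26, 31, 22⟩, ⟨1, 13, 22, 28, 11⟩, ⟨1, 14, 32, 26, 20⟩, ⟨1, 15, 34, 21, 27⟩,
    ⟨1, 16, 28, 9, 31⟩, ⟨1, 17, 25, 35, 19⟩, ⟨1, 20, 33, 8, 14⟩, ⟨1, 21, 35, 15, 9⟩,
    ⟨1, 22, 10, 27, 30⟩, ⟨1, 23, 7, 34, 13⟩, ⟨1, 26, 9, 18, 35⟩, ⟨1, 27, 31, 22, 12⟩,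
    ⟨1, 28, 23, 32, 7⟩, ⟨1, 29, 8, 30, 16⟩, ⟨1, 30, 6, 13, 26⟩, ⟨1, 31, 24, 19, 8⟩,
    ⟨1, 32, 21, 17, 6⟩, ⟨1, 33, 15, 23, 24⟩, ⟨1, 34, 14, 6, 23⟩, ⟨1, 35, 20, 24, 17⟩,
    ⟨2, 8, 12, 24, 22⟩, ⟨2, 9, 22, 13, 32⟩, ⟨2, 10, 31, 17, 21⟩, ⟨2, 11, 32, 27, 17⟩,
    ⟨2, 14, 23, 29, 11⟩, ⟨2, 15, 19, 26, 6⟩, ⟨2, 16, 34, 10, 28⟩, ⟨2, 17, 7, 20, 30⟩,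
    ⟨2, 21, 13, 8, 24⟩, ⟨2, 22, 35, 28, 10⟩, ⟨2, 23, 25, 14, 31⟩, ⟨2, 27, 16, 19, 33⟩,
    ⟨2, 28, 30, 23, 15⟩, ⟨2, 29, 33, 9, 23⟩, ⟨2, 30, 11, 22, 27⟩, ⟨2, 31, 29, 16, 9⟩,
    ⟨2, 32, 10, 18, 25⟩, ⟨2, 33, 28, 12, 7⟩, ⟨2, 34, 21, 7, 12⟩, ⟨2, 35, 15, 25, 18⟩,
    ⟨3, 9, 15, 27, 23⟩, ⟨3, 10, 29, 14, 34⟩, ⟨3, 11, 30, 12, 20⟩, ⟨3, 15, 18, 24, 7⟩,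
    ⟨3, 16, 32, 28, 22⟩, ⟨3, 17, 34, 23, 29⟩, ⟨3, 22, 33, 10, 16⟩, ⟨3, 23, 35, 17, 11⟩,
    ⟨3, 28, 11, 20, 35⟩, ⟨3, 29, 31, 18, 14⟩, ⟨3, 30, 8, 15, 28⟩, ⟨3, 31, 26, 21, 10⟩,
    ⟨3, 32, 23, 13, 8⟩, ⟨3, 33, 17, 19, 26⟩, ⟨3, 34, 16, 8, 19⟩, ⟨3, 35, 22, 26, 13⟩,
    ⟨4, 10, 14, 26, 18⟩, ⟨4, 11, 18, 15, 32⟩, ⟨4, 16, 19, 25, 7⟩, ⟨4, 17, 21, 28, 8⟩,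
    ⟨4, 23, 15, 10, 26⟩, ⟨4, 29, 12, 21, 33⟩, ⟨4, 30, 7, 18, 29⟩, ⟨4, 31, 25, 12, 11⟩,
    ⟨4, 32, 6, 20, 27⟩, ⟨4, 33, 24, 14, 9⟩, ⟨4, 34, 23, 9, 14⟩, ⟨4, 35, 17, 27, 20⟩,
    ⟨5, 11, 17, 29, 19⟩, ⟨5, 17, 20, 26, 9⟩, ⟨5, 30, 10, 17, 24⟩, ⟨5, 31, 28, 23, 6⟩,
    ⟨5, 32, 19, 15, 10⟩, ⟨5, 33, 13, 21, 28⟩, ⟨5, 34, 12, 10, 21⟩, ⟨5, 35, 18, 28, 15⟩])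
    (by decide +kernel)

theorem frameOfType_6_7 : FrameOfType 6 7 :=
  frameOfType_of_checkDirect (games := develop 6 7 [
    ⟨0, 6, 30, 37, 19⟩, ⟨0, 7, 34, 28, 12⟩, ⟨0, 8, 28, 23, 16⟩, ⟨0, 9, 38, 25, 21⟩,
    ⟨0, 10, 13, 21, 40⟩, ⟨0, 11, 12, 34, 27⟩, ⟨0, 12, 18, 31, 37⟩, ⟨0, 13, 22, 10, 24⟩,
    ⟨0, 14, 10, 41, 28⟩, ⟨0, 15, 32, 7, 39⟩, ⟨0, 16, 25, 39, 34⟩, ⟨0, 17, 24, 22, 9⟩,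
    ⟨0, 18, 37, 12, 7⟩, ⟨0, 19, 41, 8, 32⟩, ⟨0, 20, 11, 27, 36⟩, ⟨0, 21, 33, 29, 17⟩,
    ⟨0, 22, 9, 32, 26⟩, ⟨0, 23, 8, 30, 41⟩, ⟨0, 25, 40, 16, 6⟩, ⟨0, 26, 16, 35, 10⟩,
    ⟨0, 27, 20, 13, 33⟩, ⟨0, 28, 7, 33, 22⟩, ⟨0, 29, 6, 40, 15⟩, ⟨0, 31, 23, 26, 38⟩,
    ⟨0, 32, 29, 15, 18⟩, ⟨0, 33, 39, 17, 11⟩, ⟨0, 34, 27, 38, 14⟩, ⟨0, 35, 26, 36, 23⟩,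
    ⟨0, 37, 35, 14, 20⟩, ⟨0, 38, 17, 9, 30⟩, ⟨0, 39, 21, 11, 29⟩, ⟨0, 40, 15, 20, 8⟩,
    ⟨0, 41, 14, 18, 35⟩, ⟨1, 7, 39, 24, 22⟩, ⟨1, 8, 26, 22, 37⟩, ⟨1, 9, 31, 19, 17⟩,
    ⟨1, 10, 15, 25, 33⟩, ⟨1, 11, 13, 32, 36⟩, ⟨1, 13, 33, 6, 40⟩, ⟨1, 14, 8, 40, 31⟩,
    ⟨1, 15, 19, 37, 29⟩, ⟨1, 16, 27, 7, 21⟩, ⟨1, 17, 25, 20, 30⟩, ⟨1, 19, 30, 39, 10⟩,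
    ⟨1, 20, 12, 26, 35⟩, ⟨1, 21, 16, 27, 38⟩, ⟨1, 22, 35, 36, 7⟩, ⟨1, 23, 11, 17, 27⟩,
    ⟨1, 26, 14, 34, 19⟩, ⟨1, 27, 37, 31, 11⟩, ⟨1, 28, 9, 13, 39⟩, ⟨1, 29, 7, 38, 18⟩,
    ⟨1, 32, 6, 14, 41⟩, ⟨1, 33, 10, 15, 20⟩, ⟨1, 34, 41, 18, 25⟩, ⟨1, 35, 29, 11, 15⟩,
    ⟨1, 38, 24, 8, 23⟩, ⟨1, 39, 28, 9, 32⟩, ⟨1, 40, 23, 30, 13⟩, ⟨1, 41, 17, 29, 9⟩,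
    ⟨2, 8, 32, 39, 21⟩, ⟨2, 9, 30, 24, 14⟩, ⟨2, 10, 24, 19, 12⟩, ⟨2, 11, 40, 27, 23⟩,
    ⟨2, 14, 20, 33, 39⟩, ⟨2, 15, 18, 6, 26⟩, ⟨2, 16, 6, 37, 24⟩, ⟨2, 17, 34, 9, 41⟩,
    ⟨2, 20, 39, 14, 9⟩, ⟨2, 21, 37, 10, 34⟩, ⟨2, 22, 7, 29, 38⟩, ⟨2, 23, 35, 25, 13⟩,
    ⟨2, 27, 36, 12, 8⟩, ⟨2, 28, 12, 31, 6⟩, ⟨2, 29, 22, 15, 35⟩, ⟨2, 33, 19, 28, 40⟩,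
    ⟨2, 34, 25, 17, 20⟩, ⟨2, 35, 41, 13, 7⟩, ⟨2, 39, 31, 16, 22⟩, ⟨2, 40, 13, 11, 32⟩,
    ⟨2, 41, 23, 7, 25⟩, ⟨3, 9, 41, 26, 18⟩, ⟨3, 10, 28, 18, 39⟩, ⟨3, 11, 33, 21, 13⟩,
    ⟨3, 15, 35, 8, 36⟩, ⟨3, 16, 10, 36, 33⟩, ⟨3, 17, 21, 39, 25⟩, ⟨3, 21, 32, 41, 6⟩,
    ⟨3, 22, 14, 28, 31⟩, ⟨3, 23, 12, 29, 40⟩, ⟨3, 28, 16, 30, 21⟩, ⟨3, 29, 39, 33, 7⟩,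
    ⟨3, 34, 8, 16, 37⟩, ⟨3, 35, 6, 17, 22⟩, ⟨3, 40, 26, 10, 19⟩, ⟨3, 41, 24, 11, 34⟩,
    ⟨4, 10, 34, 41, 23⟩, ⟨4, 11, 32, 26, 16⟩, ⟨4, 16, 22, 35, 41⟩, ⟨4, 17, 20, 8, 28⟩,
    ⟨4, 22, 41, 16, 11⟩, ⟨4, 23, 39, 6, 30⟩, ⟨4, 29, 38, 14, 10⟩, ⟨4, 35, 21, 24, 36⟩,
    ⟨4, 41, 33, 12, 18⟩, ⟨5, 11, 37, 28, 20⟩, ⟨5, 17, 31, 10, 38⟩, ⟨5, 23, 34, 37, 8⟩])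
    (by decide +kernel)

theorem frameOfType_3_27 : FrameOfType 3 27 :=
  frameOfType_of_checkDirect (games := develop 6 13 [
    ⟨0, 3, 43, 47, 78⟩, ⟨0, 4, 49, 51, 80⟩, ⟨0, 5, 67, 70, 79⟩, ⟨0, 6, 19, 5, 10⟩,
    ⟨0, 7, 80, 63, 37⟩, ⟨0, 8, 69, 65, 55⟩, ⟨0, 9, 18, 30, 33⟩, ⟨0, 10, 5, 39, 69⟩,
    ⟨0, 11, 50, 21, 43⟩, ⟨0, 12, 60, 59, 38⟩, ⟨0, 13, 56, 38, 76⟩, ⟨0, 14, 30, 53, 22⟩,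
    ⟨0, 15, 21, 10, 34⟩, ⟨0, 16, 71, 25, 64⟩, ⟨0, 17, 48, 44, 54⟩, ⟨0, 18, 55, 3, 23⟩,
    ⟨0, 19, 79, 28, 31⟩, ⟨0, 20, 46, 27, 7⟩, ⟨0, 21, 68, 58, 49⟩, ⟨0, 22, 54, 12, 16⟩,
    ⟨0, 23, 3, 34, 46⟩, ⟨0, 24, 28, 31, 3⟩, ⟨0, 25, 23, 75, 44⟩, ⟨0, 26, 22, 80, 36⟩,
    ⟨0, 27, 37, 26, 73⟩, ⟨0, 28, 32, 71, 15⟩, ⟨0, 29, 65, 35, 60⟩, ⟨0, 30, 72, 22, 14⟩,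
    ⟨0, 31, 20, 14, 27⟩, ⟨0, 32, 36, 46, 9⟩, ⟨0, 33, 52, 61, 75⟩, ⟨0, 34, 42, 68, 18⟩,
    ⟨0, 35, 11, 57, 39⟩, ⟨0, 36, 24, 9, 32⟩, ⟨0, 37, 8, 32, 65⟩, ⟨0, 38, 12, 69, 59⟩,
    ⟨0, 39, 66, 50, 6⟩, ⟨0, 40, 58, 23, 17⟩, ⟨0, 41, 45, 73, 29⟩, ⟨0, 43, 34, 55, 21⟩,
    ⟨0, 44, 73, 49, 28⟩, ⟨0, 45, 16, 33, 51⟩, ⟨0, 46, 62, 18, 56⟩, ⟨0, 47, 40, 8, 66⟩,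
    ⟨0, 49, 17, 7, 58⟩, ⟨0, 50, 61, 67, 77⟩, ⟨0, 51, 35, 20, 42⟩, ⟨0, 52, 41, 16, 70⟩,
    ⟨0, 53, 26, 54, 8⟩, ⟨0, 55, 78, 77, 13⟩, ⟨0, 56, 53, 76, 19⟩, ⟨0, 57, 4, 17, 53⟩,
    ⟨0, 58, 44, 11, 67⟩, ⟨0, 59, 6, 36, 41⟩, ⟨0, 61, 10, 29, 68⟩, ⟨0, 62, 9, 78, 12⟩,
    ⟨0, 63, 38, 52, 35⟩, ⟨0, 64, 76, 40, 72⟩, ⟨0, 65, 13, 62, 25⟩, ⟨0, 67, 39, 19, 11⟩,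
    ⟨0, 68, 25, 43, 63⟩, ⟨0, 69, 74, 6, 20⟩, ⟨0, 70, 15, 56, 48⟩, ⟨0, 71, 33, 41, 47⟩,
    ⟨0, 73, 57, 64, 50⟩, ⟨0, 74, 59, 79, 30⟩, ⟨0, 75, 27, 15, 24⟩, ⟨0, 76, 31, 74, 61⟩,
    ⟨0, 77, 14, 45, 40⟩, ⟨0, 78, 29, 60, 71⟩, ⟨0, 79, 64, 72, 52⟩, ⟨0, 80, 75, 24, 45⟩,
    ⟨1, 3, 68, 71, 80⟩, ⟨1, 4, 44, 45, 79⟩, ⟨1, 5, 50, 52, 78⟩, ⟨1, 7, 20, 3, 11⟩,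
    ⟨1, 8, 78, 64, 38⟩, ⟨1, 9, 48, 22, 44⟩, ⟨1, 10, 19, 31, 34⟩, ⟨1, 11, 3, 40, 70⟩,
    ⟨1, 13, 61, 57, 36⟩, ⟨1, 14, 54, 36, 77⟩, ⟨1, 15, 49, 42, 55⟩, ⟨1, 16, 22, 11, 35⟩,
    ⟨1, 17, 69, 26, 65⟩, ⟨1, 19, 56, 4, 21⟩, ⟨1, 20, 80, 29, 32⟩, ⟨1, 21, 4, 35, 47⟩,
    ⟨1, 22, 66, 59, 50⟩, ⟨1, 23, 55, 13, 17⟩, ⟨1, 25, 29, 32, 4⟩, ⟨1, 26, 21, 76, 42⟩,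
    ⟨1, 27, 63, 33, 61⟩, ⟨1, 28, 38, 24, 74⟩, ⟨1, 29, 30, 69, 16⟩, ⟨1, 31, 73, 23, 12⟩,
    ⟨1, 32, 18, 12, 28⟩, ⟨1, 33, 9, 58, 40⟩, ⟨1, 34, 53, 62, 76⟩, ⟨1, 35, 43, 66, 19⟩,
    ⟨1, 37, 25, 10, 30⟩, ⟨1, 38, 6, 30, 63⟩, ⟨1, 39, 46, 74, 27⟩, ⟨1, 40, 67, 48, 7⟩,
    ⟨1, 41, 59, 21, 15⟩, ⟨1, 44, 35, 56, 22⟩, ⟨1, 45, 41, 6, 67⟩, ⟨1, 46, 17, 34, 52⟩,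
    ⟨1, 47, 60, 19, 54⟩, ⟨1, 50, 15, 8, 59⟩, ⟨1, 51, 24, 55, 6⟩, ⟨1, 52, 33, 18, 43⟩,
    ⟨1, 53, 39, 17, 71⟩, ⟨1, 56, 79, 75, 14⟩, ⟨1, 57, 7, 37, 39⟩, ⟨1, 58, 5, 15, 51⟩,
    ⟨1, 59, 42, 9, 68⟩, ⟨1, 62, 11, 27, 66⟩, ⟨1, 63, 14, 60, 26⟩, ⟨1, 64, 36, 53, 33⟩,
    ⟨1, 65, 77, 41, 73⟩, ⟨1, 68, 40, 20, 9⟩, ⟨1, 69, 34, 39, 45⟩, ⟨1, 70, 72, 7, 18⟩,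
    ⟨1, 71, 16, 54, 49⟩, ⟨1, 74, 58, 65, 48⟩, ⟨1, 75, 12, 46, 41⟩, ⟨1, 76, 28, 16, 25⟩,
    ⟨1, 77, 32, 72, 62⟩, ⟨1, 78, 76, 25, 46⟩, ⟨1, 79, 27, 61, 69⟩, ⟨1, 80, 65, 73, 53⟩,
    ⟨2, 3, 48, 53, 79⟩, ⟨2, 4, 66, 69, 78⟩, ⟨2, 5, 42, 46, 80⟩, ⟨2, 8, 18, 4, 9⟩,
    ⟨2, 9, 4, 41, 71⟩, ⟨2, 10, 49, 23, 42⟩, ⟨2, 11, 20, 32, 35⟩, ⟨2, 14, 62, 58, 37⟩,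
    ⟨2, 15, 70, 24, 63⟩, ⟨2, 16, 50, 43, 56⟩, ⟨2, 17, 23, 9, 33⟩, ⟨2, 20, 54, 5, 22⟩,
    ⟨2, 21, 56, 14, 15⟩, ⟨2, 22, 5, 33, 45⟩, ⟨2, 23, 67, 57, 48⟩, ⟨2, 26, 27, 30, 5⟩,
    ⟨2, 27, 31, 70, 17⟩, ⟨2, 28, 64, 34, 62⟩, ⟨2, 29, 36, 25, 72⟩, ⟨2, 32, 74, 21, 13⟩,
    ⟨2, 33, 44, 67, 20⟩, ⟨2, 34, 10, 59, 41⟩, ⟨2, 35, 51, 60, 77⟩, ⟨2, 38, 26, 11, 31⟩,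
    ⟨2, 39, 57, 22, 16⟩, ⟨2, 40, 47, 72, 28⟩, ⟨2, 41, 68, 49, 8⟩, ⟨2, 45, 61, 20, 55⟩,
    ⟨2, 46, 39, 7, 68⟩, ⟨2, 47, 15, 35, 53⟩, ⟨2, 51, 40, 15, 69⟩, ⟨2, 52, 25, 56, 7⟩,
    ⟨2, 53, 34, 19, 44⟩, ⟨2, 57, 43, 10, 66⟩, ⟨2, 58, 8, 38, 40⟩, ⟨2, 59, 3, 16, 52⟩,
    ⟨2, 63, 75, 39, 74⟩, ⟨2, 64, 12, 61, 24⟩, ⟨2, 65, 37, 51, 34⟩, ⟨2, 69, 17, 55, 50⟩,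
    ⟨2, 70, 35, 40, 46⟩, ⟨2, 71, 73, 8, 19⟩, ⟨2, 75, 30, 73, 60⟩, ⟨2, 76, 13, 47, 39⟩,
    ⟨2, 77, 29, 17, 26⟩, ⟨2, 78, 63, 74, 51⟩, ⟨2, 79, 77, 26, 47⟩, ⟨2, 80, 28, 62, 70⟩,
    ⟨3, 9, 23, 1, 8⟩, ⟨3, 10, 66, 61, 59⟩, ⟨3, 11, 79, 60, 41⟩, ⟨3, 15, 63, 55, 40⟩,
    ⟨3, 16, 33, 49, 20⟩, ⟨3, 17, 58, 40, 74⟩, ⟨3, 21, 59, 0, 19⟩, ⟨3, 22, 44, 24, 11⟩,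
    ⟨3, 23, 80, 26, 35⟩, ⟨3, 27, 26, 35, 0⟩, ⟨3, 28, 20, 79, 39⟩, ⟨3, 29, 19, 72, 46⟩,
    ⟨3, 33, 75, 20, 16⟩, ⟨3, 34, 39, 44, 6⟩, ⟨3, 35, 22, 16, 24⟩, ⟨3, 39, 27, 6, 34⟩,
    ⟨3, 40, 15, 66, 55⟩, ⟨3, 41, 10, 34, 61⟩, ⟨3, 46, 77, 53, 26⟩, ⟨3, 47, 32, 59, 18⟩,
    ⟨3, 52, 65, 71, 73⟩, ⟨3, 53, 13, 11, 56⟩, ⟨3, 58, 49, 74, 23⟩, ⟨3, 59, 78, 73, 17⟩,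
    ⟨3, 64, 6, 78, 15⟩, ⟨3, 65, 8, 25, 70⟩, ⟨3, 70, 29, 47, 60⟩, ⟨3, 71, 36, 23, 7⟩,
    ⟨3, 76, 55, 80, 33⟩, ⟨3, 77, 54, 62, 52⟩, ⟨3, 78, 25, 63, 67⟩, ⟨3, 79, 72, 27, 42⟩,
    ⟨3, 80, 62, 75, 50⟩, ⟨4, 10, 21, 2, 6⟩, ⟨4, 11, 67, 62, 57⟩, ⟨4, 16, 64, 56, 41⟩,
    ⟨4, 17, 34, 50, 18⟩, ⟨4, 22, 57, 1, 20⟩, ⟨4, 23, 42, 25, 9⟩, ⟨4, 28, 24, 33, 1⟩,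
    ⟨4, 29, 18, 80, 40⟩, ⟨4, 34, 76, 18, 17⟩, ⟨4, 35, 40, 42, 7⟩, ⟨4, 40, 28, 7, 35⟩,
    ⟨4, 41, 16, 67, 56⟩, ⟨4, 47, 75, 51, 24⟩, ⟨4, 53, 63, 69, 74⟩, ⟨4, 59, 50, 72, 21⟩,
    ⟨4, 65, 7, 79, 16⟩, ⟨4, 71, 27, 45, 61⟩, ⟨4, 77, 56, 78, 34⟩, ⟨4, 78, 60, 76, 48⟩,
    ⟨4, 79, 26, 64, 68⟩, ⟨4, 80, 73, 28, 43⟩, ⟨5, 11, 22, 0, 7⟩, ⟨5, 17, 65, 54, 39⟩,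
    ⟨5, 23, 58, 2, 18⟩, ⟨5, 29, 25, 34, 2⟩, ⟨5, 35, 77, 19, 15⟩, ⟨5, 41, 29, 8, 33⟩,
    ⟨5, 78, 74, 29, 44⟩, ⟨5, 79, 61, 77, 49⟩, ⟨5, 80, 24, 65, 66⟩])
    (by decide +kernel)

end Certificates

section Existence

theorem frameOfType_of_le_one {w k : ℕ} (hk : k ≤ 1) : FrameOfType w k := by
  have := Fin.subsingleton_iff_le_one.2 hk
  refine ⟨∅, fun _ h => h.elim, fun _ => ?_⟩
  have hempty : {p : (Fin k × Fin w) × Fin k × Fin w | p.1.1 ≠ p.2.1} = ∅ :=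
    Set.eq_empty_of_forall_notMem fun p hp => hp (Subsingleton.elim _ _)
  exact hempty ▸ Set.bijOn_empty _

theorem FrameOfType.inflate_fill {v k q e : ℕ} (h : FrameOfType v k) (hq : IsPrimePow q)
    (hq4 : 4 ≤ q) (he : e ≤ 1) (hfill : FrameOfType v (q + e)) : FrameOfType v (k * q + e) :=
  FrameOfType.fill (mul_comm v q ▸ h.inflate hq hq4) he hfill

theorem frameOfType_three_mul_four_add_one {k : ℕ} (h : FrameOfType 3 k) :
    FrameOfType 3 (k * 4 + 1) :=
  h.inflate_fill (Nat.prime_two.isPrimePow.pow two_ne_zero) le_rfl le_rfl frameOfType_3_5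

theorem frameOfType_three_mul_eight_add_one {k : ℕ} (h : FrameOfType 3 k) :
    FrameOfType 3 (k * 8 + 1) :=
  h.inflate_fill (Nat.prime_two.isPrimePow.pow three_ne_zero) (by norm_num) le_rfl frameOfType_3_9

theorem frameOfType_three_mul_five {k : ℕ} (h : FrameOfType 3 k) : FrameOfType 3 (k * 5) :=
  h.inflate_fill (q := 5) (e := 0) Nat.prime_five.isPrimePow (by norm_num) zero_le_one
    frameOfType_3_5

theorem frameOfType_three_mul_seven {k : ℕ} (h : FrameOfType 3 k) : FrameOfType 3 (k * 7) :=
  h.inflate_fill (q := 7) (e := 0) Nat.prime_seven.isPrimePow (by norm_num) zero_le_one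
    frameOfType_3_7

theorem frameOfType_3_51 : FrameOfType 3 51 :=
  FrameOfType.fill (k := 5) (m := 10) (e := 1)
    (frameOfType_6_5.inflate Nat.prime_five.isPrimePow (by norm_num)) le_rfl frameOfType_3_11

theorem pairwise_isUnit_sub_of_injective {F J : Type*} [Field F] {c : J → F}
    (hc : Function.Injective c) : Pairwise fun i j => IsUnit (c i - c j) :=
  fun _ _ hij => (sub_ne_zero.2 (hc.ne hij)).isUnit

theorem pairwise_isUnit_natCast_sub {g : ℕ} (hg : Nat.Coprime 30 g) :
    Pairwise fun i j : Fin 6 => IsUnit (((i : ℕ) : ZMod g) - (j : ℕ)) := by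
  have hlt {i j : Fin 6} (hij : i < j) : IsUnit (((j : ℕ) : ZMod g) - (i : ℕ)) := by
    rw [← Nat.cast_sub hij.le, ZMod.isUnit_iff_coprime]
    have hdvd : ∀ i j : Fin 6, i < j → ((j - i : ℕ) ∣ 30 ∨ (j - i : ℕ) ∣ 30 ^ 2) := by decide
    rcases hdvd i j hij with h | h
    · exact hg.coprime_dvd_left h
    · exact (hg.pow_left 2).coprime_dvd_left h
  intro i j hij
  rcases hij.lt_or_gt with h | h
  · exact (neg_sub ((j : ℕ) : ZMod g) (i : ℕ)) ▸ (hlt h).neg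
  · exact hlt h

/-- Omitting one point from every group of a transversal design with eight groups of size seven
leaves blocks of size seven and, as the omitted points form a block, an empty one. -/
theorem frameOfType_3_33 : FrameOfType 3 33 := by
  have hblock : ∀ b : ZMod 7 × ZMod 7,
      Set.ncard {j | blockEntry id b j ∈ ({0}ᶜ : Finset (ZMod 7))} ∈ ({0, 7} : Finset ℕ) := by
    simp only [Set.ncard_eq_toFinset_card']
    decide +kernel
  have : Fact (Nat.Prime 7) := ⟨Nat.prime_seven⟩
  refine frameOfType_of_transversalDesign (c := (id : ZMod 7 → ZMod 7)) (w := 2)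
    (T := fun _ => {0}ᶜ) (m := fun _ => 4) (e := 1)
    (pairwise_isUnit_sub_of_injective Function.injective_id)
    (fun b => ?_) (fun _ => rfl) le_rfl fun _ => frameOfType_3_5
  rcases Finset.mem_insert.1 (hblock b) with h0 | h7
  · rw [h0]
    exact frameOfType_of_le_one zero_le_one
  · rw [Finset.mem_singleton.1 h7]
    exact frameOfType_2_7

theorem frameOfType_six {s : ℕ} (h5 : 5 ≤ s) (h7 : s ≤ 7) : FrameOfType 6 s := by
  interval_cases s
  exacts [frameOfType_6_5, frameOfType_6_6, frameOfType_6_7]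

theorem frameOfType_three_of_truncation {R J : Type*} [CommRing R] [Fintype R] [Fintype J]
    {c : J → R} (hc : Pairwise fun i j => IsUnit (c i - c j)) (hJ : Fintype.card J ≤ 6)
    {size : Option J → ℕ} (hsize : ∀ j, size j ≤ Fintype.card R) {full : Fin 5 → Option J}
    (hinj : Function.Injective full) (hfull : ∀ i, size (full i) = Fintype.card R)
    (hfill : ∀ j, FrameOfType 3 (2 * size j + 1)) : FrameOfType 3 (2 * ∑ j, size j + 1) := by
  refine frameOfType_of_truncation hc hsize (fun s h5 h7 => ?_) le_rfl hfill
  have hcard : 5 ≤ {j | size j = Fintype.card R}.ncard := by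
    calc 5 = (Set.range full).ncard := by rw [Set.ncard_range_of_injective hinj, Nat.card_fin]
      _ ≤ _ := Set.ncard_le_ncard (Set.range_subset_iff.2 hfull)
  exact frameOfType_six (hcard.trans h5) (h7.trans (Nat.succ_le_succ hJ))

theorem frameOfType_3_59 : FrameOfType 3 59 := by
  have : Fact (Nat.Prime 5) := ⟨Nat.prime_five⟩
  let size (j : Option (Fin 5)) : ℕ := j.elim 4 fun _ => 5
  refine frameOfType_three_of_truncation (R := ZMod 5) (c := fun i => ZMod.finEquiv 5 i)
    (size := size) (pairwise_isUnit_sub_of_injective (ZMod.finEquiv 5).injective) (by simp) ?_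
    (Option.some_injective _) (fun _ => rfl) ?_
  · rintro (_ | _) <;> simp [size]
  · rintro (_ | _)
    exacts [frameOfType_3_9, frameOfType_3_11]

theorem frameOfType_three_of_le {N : ℕ} (h2 : 2 ≤ N) (h34 : N ≤ 34) :
    FrameOfType 3 (2 * N + 1) := by
  interval_cases N
  exacts [frameOfType_3_5, frameOfType_3_7, frameOfType_3_9, frameOfType_3_11, frameOfType_3_13,
    frameOfType_3_15, frameOfType_3_17, frameOfType_3_19,
    frameOfType_three_mul_four_add_one frameOfType_3_5, frameOfType_3_23,
    frameOfType_three_mul_five frameOfType_3_5, frameOfType_3_27,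
    frameOfType_three_mul_four_add_one frameOfType_3_7, frameOfType_3_31, frameOfType_3_33,
    frameOfType_three_mul_five frameOfType_3_7,
    frameOfType_three_mul_four_add_one frameOfType_3_9, frameOfType_3_39,
    frameOfType_three_mul_eight_add_one frameOfType_3_5, frameOfType_3_43,
    frameOfType_three_mul_five frameOfType_3_9, frameOfType_3_47,
    frameOfType_three_mul_seven frameOfType_3_7, frameOfType_3_51,
    frameOfType_three_mul_four_add_one frameOfType_3_13,
    frameOfType_three_mul_five frameOfType_3_11,
    frameOfType_three_mul_eight_add_one frameOfType_3_7, frameOfType_3_59,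
    frameOfType_three_mul_four_add_one frameOfType_3_15,
    frameOfType_three_mul_seven frameOfType_3_9,
    frameOfType_three_mul_five frameOfType_3_13, frameOfType_3_67,
    frameOfType_three_mul_four_add_one frameOfType_3_17]

theorem frameOfType_three_of_two_truncations {R : Type*} [CommRing R] [Fintype R] {c : Fin 6 → R}
    (hc : Pairwise fun i j => IsUnit (c i - c j)) {t u : ℕ} (ht : t ≤ Fintype.card R)
    (hu : u ≤ Fintype.card R) (hfill_t : FrameOfType 3 (2 * t + 1))
    (hfill_u : FrameOfType 3 (2 * u + 1)) (hfill : FrameOfType 3 (2 * Fintype.card R + 1)) :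
    FrameOfType 3 (2 * (5 * Fintype.card R + (t + u)) + 1) := by
  let size (j : Option (Fin 6)) : ℕ := j.elim t (Fin.cons u fun _ => Fintype.card R)
  have hsum : ∑ j, size j = 5 * Fintype.card R + (t + u) := by
    simp only [size, Fintype.sum_option, Option.elim_none, Option.elim_some, Fin.sum_cons,
      Finset.sum_const, Finset.card_univ, Fintype.card_fin, smul_eq_mul]
    ring
  have hcases {P : ℕ → Prop} (ht : P t) (hu : P u) (hR : P (Fintype.card R)) :
      ∀ j, P (size j) := by
    intro j
    rcases j with _ | j
    · exact ht
    · exact Fin.cases hu (fun _ => hR) j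
  rw [← hsum]
  exact frameOfType_three_of_truncation hc (Fintype.card_fin 6).le
    (hcases (P := (· ≤ _)) ht hu le_rfl)
    ((Option.some_injective _).comp (Fin.succ_injective 5)) (fun _ => rfl)
    (hcases (P := fun s => FrameOfType 3 (2 * s + 1)) hfill_t hfill_u hfill)

theorem frameOfType_three_of_interval {R : Type*} [CommRing R] [Fintype R] {c : Fin 6 → R}
    (hc : Pairwise fun i j => IsUnit (c i - c j)) (hR : 3 ≤ Fintype.card R) {N : ℕ}
    (hN : 5 * Fintype.card R ≤ N) (hN' : N ≤ 7 * Fintype.card R) (hne : N ≠ 5 * Fintype.card R + 1)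
    (ih : ∀ M < N, M ≠ 1 → FrameOfType 3 (2 * M + 1)) : FrameOfType 3 (2 * N + 1) := by
  obtain ⟨t, u, ht, hu, ht1, hu1, rfl⟩ : ∃ t u, t ≤ Fintype.card R ∧ u ≤ Fintype.card R ∧
      t ≠ 1 ∧ u ≠ 1 ∧ N = 5 * Fintype.card R + (t + u) := by
    by_cases h3 : N ≤ 5 * Fintype.card R + 3
    · exact ⟨N - 5 * Fintype.card R, 0, by omega⟩
    · exact ⟨(N - 5 * Fintype.card R) / 2, (N - 5 * Fintype.card R + 1) / 2, by omega⟩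
  exact frameOfType_three_of_two_truncations hc ht hu (ih t (by omega) ht1) (ih u (by omega) hu1)
    (ih _ (by omega) (by omega))

theorem exists_coprime_thirty (m : ℕ) : ∃ i < 6, Nat.Coprime 30 (m + i) := by
  have hmod : ∀ r < 30, ∃ i < 6, Nat.Coprime 30 (r + i) := by decide
  obtain ⟨i, hi, hcoprime⟩ := hmod (m % 30) (Nat.mod_lt _ (by norm_num))
  refine ⟨i, hi, ?_⟩
  rw [← (Nat.periodic_coprime 30).map_mod_nat] at hcoprime ⊢
  rwa [Nat.mod_add_mod] at hcoprime

theorem exists_coprime_thirty_of_interval {N : ℕ} (hN : 37 ≤ N) (hN' : N ≤ 49 ∨ 57 ≤ N) :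
    ∃ g, Nat.Coprime 30 g ∧ 5 * g + 2 ≤ N ∧ N ≤ 7 * g := by
  by_cases hlarge : N ≤ 119
  · have hsmall : ∀ g ∈ [7, 11, 13, 17], Nat.Coprime 30 g := by decide
    obtain ⟨g, hg, hgN⟩ : ∃ g ∈ [7, 11, 13, 17], 5 * g + 2 ≤ N ∧ N ≤ 7 * g := by
      simp only [List.mem_cons, List.not_mem_nil, or_false, exists_eq_or_imp, exists_eq_left]
      omega
    exact ⟨g, hsmall g hg, hgN⟩
  · obtain ⟨i, hi, hcoprime⟩ := exists_coprime_thirty ((N - 2) / 5 - 5)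
    exact ⟨_, hcoprime, by omega, by omega⟩

theorem frameOfType_three_of_coprime {g N : ℕ} (hg : Nat.Coprime 30 g) (hg3 : 3 ≤ g)
    (hN : 5 * g ≤ N) (hN' : N ≤ 7 * g) (hne : N ≠ 5 * g + 1)
    (ih : ∀ M < N, M ≠ 1 → FrameOfType 3 (2 * M + 1)) : FrameOfType 3 (2 * N + 1) := by
  have : NeZero g := ⟨by omega⟩
  rw [← ZMod.card g] at hg3 hN hN' hne
  exact frameOfType_three_of_interval (pairwise_isUnit_natCast_sub hg) hg3 hN hN' hne ih

theorem frameOfType_three_of_field {F : Type*} [Field F] [Fintype F] {N : ℕ}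
    (hF : 6 ≤ Fintype.card F) (hN : 5 * Fintype.card F ≤ N) (hN' : N ≤ 7 * Fintype.card F)
    (hne : N ≠ 5 * Fintype.card F + 1) (ih : ∀ M < N, M ≠ 1 → FrameOfType 3 (2 * M + 1)) :
    FrameOfType 3 (2 * N + 1) := by
  obtain ⟨c⟩ : Nonempty (Fin 6 ↪ F) :=
    Function.Embedding.nonempty_of_card_le (by rwa [Fintype.card_fin])
  exact frameOfType_three_of_interval (pairwise_isUnit_sub_of_injective c.injective)
    (le_trans (by norm_num) hF) hN hN' hne ih

theorem frameOfType_three (N : ℕ) (hN : N ≠ 1) : FrameOfType 3 (2 * N + 1) := by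
  induction N using Nat.strong_induction_on with
  | _ N ih =>
    obtain rfl | ⟨h2, h34⟩ | rfl | rfl | ⟨h37, h49_57⟩ | ⟨h50, h56⟩ :
        N = 0 ∨ 2 ≤ N ∧ N ≤ 34 ∨ N = 35 ∨ N = 36 ∨ 37 ≤ N ∧ (N ≤ 49 ∨ 57 ≤ N) ∨
          50 ≤ N ∧ N ≤ 56 := by
      omega
    · exact frameOfType_of_le_one le_rfl
    · exact frameOfType_three_of_le h2 h34
    · exact frameOfType_three_of_coprime (g := 7) (by decide) (by decide) le_rfl (by decide)
        (by decide) ih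
    · exact frameOfType_three_mul_eight_add_one frameOfType_3_9
    · obtain ⟨g, hg, hN2, hN7⟩ := exists_coprime_thirty_of_interval h37 h49_57
      exact frameOfType_three_of_coprime hg (by omega) (by omega) hN7 (by omega) ih
    · have := Fintype.ofFinite (GaloisField 3 2)
      have hcard : Fintype.card (GaloisField 3 2) = 9 := by
        rw [← Nat.card_eq_fintype_card, GaloisField.card 3 2 two_ne_zero]
        rfl
      exact frameOfType_three_of_field (F := GaloisField 3 2) (by omega) (by omega) (by omega)
        (by omega) ih

end Existence

section Schedules

open ScheduledGame

variable {X : Type*} {N n : ℕ}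

instance [Finite X] : Finite (ScheduledGame X) :=
  Finite.of_injective (fun g => (g.man₁, g.man₂, g.woman₁, g.woman₂, g.round)) fun g g' h => by
    simpa only [Prod.mk.injEq, ScheduledGame.ext_iff] using h

/-- A set of games, each listed with its teams in both orders, without a player opposing itself. -/
structure IsSchedule (Ω : Set (ScheduledGame X)) : Prop where
  swap_mem : ∀ g ∈ Ω, g.swap ∈ Ω
  men_ne : ∀ g ∈ Ω, g.man₁ ≠ g.man₂
  women_ne : ∀ g ∈ Ω, g.woman₁ ≠ g.woman₂

theorem isSchedule_coe {s : Finset (ScheduledGame X)}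
    (hs : ∀ g ∈ s, g.swap ∈ s ∧ g.man₁ ≠ g.man₂ ∧ g.woman₁ ≠ g.woman₂) :
    IsSchedule (s : Set (ScheduledGame X)) where
  swap_mem g hg := (hs g hg).1
  men_ne g hg := (hs g hg).2.1
  women_ne g hg := (hs g hg).2.2

theorem IsSchedule.sep_round {Ω : Set (ScheduledGame X)} (hΩ : IsSchedule Ω) (x : X) :
    IsSchedule {g ∈ Ω | g.round = x} where
  swap_mem g hg := ⟨hΩ.swap_mem g hg.1, hg.2⟩
  men_ne g hg := hΩ.men_ne g hg.1
  women_ne g hg := hΩ.women_ne g hg.1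

/-- The underlying game, without its round. -/
def ScheduledGame.toGame (g : ScheduledGame (Fin N)) : Game N :=
  s((g.man₁, g.woman₁), (g.man₂, g.woman₂))

/-- The games of a schedule, each taken once: of its two orientations, the one with `man₁ < man₂`
is kept. -/
noncomputable def gamesOf (Ω : Set (ScheduledGame (Fin N))) : Multiset (Game N) :=
  ∑ g ∈ (Set.toFinite {g ∈ Ω | g.man₁ < g.man₂}).toFinset, {g.toGame}

theorem mem_gamesOf {Ω : Set (ScheduledGame (Fin N))} {x : Game N} (hx : x ∈ gamesOf Ω) :
    ∃ g ∈ Ω, g.toGame = x := by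
  obtain ⟨g, hg, hxg⟩ := Multiset.mem_sum.1 hx
  exact ⟨g, ((Set.Finite.mem_toFinset _).1 hg).1, (Multiset.mem_singleton.1 hxg).symm⟩

theorem gamesOf_union {Ω Ω' : Set (ScheduledGame (Fin N))} (h : Disjoint Ω Ω') :
    gamesOf (Ω ∪ Ω') = gamesOf Ω + gamesOf Ω' := by
  rw [gamesOf, gamesOf, gamesOf, ← Finset.sum_union]
  · refine Finset.sum_congr (Finset.ext fun g => ?_) fun _ _ => rfl
    simp [or_and_right]
  · rw [Set.Finite.disjoint_toFinset]
    exact h.mono (Set.sep_subset _ _) (Set.sep_subset _ _)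

theorem gamesOf_eq_sum_rounds (Ω : Set (ScheduledGame (Fin N))) :
    gamesOf Ω = ∑ x, gamesOf {g ∈ Ω | g.round = x} := by
  rw [gamesOf, ← Finset.sum_fiberwise _ ScheduledGame.round]
  refine Finset.sum_congr rfl fun x _ => Finset.sum_congr (Finset.ext fun g => ?_) fun _ _ => rfl
  simp [and_right_comm]

theorem countP_gamesOf {Ω : Set (ScheduledGame (Fin N))} (hΩ : IsSchedule Ω)
    {p : Game N → Prop} {q : ScheduledGame (Fin N) → Prop}
    (hp : ∀ g, p g.toGame ↔ q g ∨ q g.swap) (hq : ∀ g ∈ Ω, q g → ¬ q g.swap) :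
    (gamesOf Ω).countP p = {g ∈ Ω | q g}.ncard := by
  have hcount : (gamesOf Ω).countP p = {g ∈ Ω | g.man₁ < g.man₂ ∧ p g.toGame}.ncard := by
    rw [gamesOf, ← Multiset.coe_countPAddMonoidHom, map_sum,
      Set.ncard_eq_toFinset_card _ (Set.toFinite _)]
    simp only [Multiset.coe_countPAddMonoidHom, ← Multiset.cons_zero, Multiset.countP_cons,
      Multiset.countP_zero, zero_add, ← Finset.card_filter]
    refine congrArg Finset.card (Finset.ext fun g => ?_)
    simp only [Finset.mem_filter, Set.Finite.mem_toFinset, Set.mem_ofPred_eq, and_assoc]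
  have hsplit : {g ∈ Ω | g.man₁ < g.man₂ ∧ p g.toGame} =
      {g ∈ Ω | g.man₁ < g.man₂ ∧ q g} ∪ {g ∈ Ω | g.man₁ < g.man₂ ∧ q g.swap} := by
    ext g
    simp only [hp, Set.mem_union, Set.mem_ofPred_eq]
    tauto
  have hsplit' : {g ∈ Ω | q g} =
      {g ∈ Ω | g.man₁ < g.man₂ ∧ q g} ∪ swap '' {g ∈ Ω | g.man₁ < g.man₂ ∧ q g.swap} := by
    ext g
    constructor
    · rintro ⟨hg, hqg⟩
      rcases (hΩ.men_ne g hg).lt_or_gt with hlt | hgt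
      exacts [.inl ⟨hg, hlt, hqg⟩, .inr ⟨g.swap, ⟨hΩ.swap_mem g hg, hgt, hqg⟩, rfl⟩]
    · rintro (⟨hg, -, hqg⟩ | ⟨g, ⟨hg, -, hqg⟩, rfl⟩)
      exacts [⟨hg, hqg⟩, ⟨hΩ.swap_mem g hg, hqg⟩]
  have hswap : Function.Injective (swap (X := Fin N)) :=
    Function.LeftInverse.injective (g := swap) fun _ => rfl
  rw [hcount, hsplit, hsplit', Set.ncard_union_eq, Set.ncard_union_eq,
    Set.ncard_image_of_injective _ hswap]
  · rw [Set.disjoint_left]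
    rintro g ⟨-, hlt, -⟩ ⟨g', ⟨-, hlt', -⟩, rfl⟩
    exact lt_asymm hlt hlt'
  · exact Set.disjoint_left.2 fun g ⟨hg, _, hqg⟩ ⟨_, _, hqg'⟩ => hq g hg hqg hqg'

/-- The number of games in which the pairing of kind `k` is `p`. -/
noncomputable def encounters (Ω : Set (ScheduledGame X)) (k : Fin 6) (p : X × X) : ℕ :=
  {g ∈ Ω | pairing k g = p}.ncard

theorem encounters_coe [DecidableEq X] (s : Finset (ScheduledGame X)) (k : Fin 6)
    (p : X × X) :
    encounters (s : Set (ScheduledGame X)) k p = (s.filter (pairing k · = p)).card := by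
  rw [encounters, ← Set.ncard_coe_finset, Finset.coe_filter]
  rfl

theorem toGame_exists_iff {Q : Fin N × Fin N → Fin N × Fin N → Prop} (g : ScheduledGame (Fin N)) :
    (∃ a b, g.toGame = s(a, b) ∧ Q a b) ↔
      Q (g.man₁, g.woman₁) (g.man₂, g.woman₂) ∨ Q (g.man₂, g.woman₂) (g.man₁, g.woman₁) := by
  constructor
  · rintro ⟨a, b, hg, hQ⟩
    rcases Sym2.eq_iff.1 hg with ⟨rfl, rfl⟩ | ⟨rfl, rfl⟩
    exacts [.inl hQ, .inr hQ]
  · rintro (h | h)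
    exacts [⟨_, _, rfl, h⟩, ⟨_, _, Sym2.eq_swap, h⟩]

section Counting

variable {Ω : Set (ScheduledGame (Fin N))} (hΩ : IsSchedule Ω) (x y : Fin N)
include hΩ

theorem countP_partners : (gamesOf Ω).countP (Game.partners x y) = encounters Ω 1 (x, y) := by
  refine countP_gamesOf hΩ (fun g => ?_) fun g hg h h' => hΩ.men_ne g hg ?_
  · simp [Game.partners, toGame, pairing, swap, eq_comm]
  · exact congrArg Prod.fst (h.trans h'.symm)

theorem countP_opposesMM : (gamesOf Ω).countP (Game.opposesMM x y) = encounters Ω 0 (x, y) := by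
  refine countP_gamesOf hΩ (fun g => ?_) fun g hg h h' => hΩ.men_ne g hg ?_
  · simp only [Game.opposesMM, toGame_exists_iff, pairing, swap, Prod.mk.injEq]
  · exact congrArg Prod.fst (h.trans h'.symm)

theorem countP_opposesMW : (gamesOf Ω).countP (Game.opposesMW x y) = encounters Ω 2 (x, y) := by
  refine countP_gamesOf hΩ (fun g => ?_) fun g hg h h' => hΩ.men_ne g hg ?_
  · simp only [Game.opposesMW, toGame_exists_iff, pairing, swap, Prod.mk.injEq]
  · exact congrArg Prod.fst (h.trans h'.symm)

theorem countP_opposesWW : (gamesOf Ω).countP (Game.opposesWW x y) = encounters Ω 3 (x, y) := by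
  refine countP_gamesOf hΩ (fun g => ?_) fun g hg h h' => hΩ.women_ne g hg ?_
  · simp only [Game.opposesWW, toGame_exists_iff, pairing, swap, Prod.mk.injEq]
  · exact congrArg Prod.fst (h.trans h'.symm)

theorem countP_manIn : (gamesOf Ω).countP (Game.manIn x) = {g ∈ Ω | g.man₁ = x}.ncard := by
  refine countP_gamesOf hΩ (fun g => ?_) fun g hg h h' => hΩ.men_ne g hg (h.trans h'.symm)
  simp only [Game.manIn, toGame_exists_iff, swap]

theorem countP_womanIn : (gamesOf Ω).countP (Game.womanIn x) = {g ∈ Ω | g.woman₁ = x}.ncard := by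
  refine countP_gamesOf hΩ (fun g => ?_) fun g hg h h' => hΩ.women_ne g hg (h.trans h'.symm)
  simp only [Game.womanIn, toGame_exists_iff, swap]

theorem countP_manIn_round :
    (gamesOf {g ∈ Ω | g.round = y}).countP (Game.manIn x) = encounters Ω 4 (x, y) := by
  rw [countP_manIn (hΩ.sep_round y), encounters]
  simp only [Set.mem_ofPred_eq, pairing, Prod.mk.injEq, and_assoc, and_comm (a := _ = y)]

theorem countP_womanIn_round :
    (gamesOf {g ∈ Ω | g.round = y}).countP (Game.womanIn x) = encounters Ω 5 (x, y) := by
  rw [countP_womanIn (hΩ.sep_round y), encounters]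
  simp only [Set.mem_ofPred_eq, pairing, Prod.mk.injEq, and_assoc, and_comm (a := _ = y)]

theorem valid_of_mem_gamesOf {x : Game N} (hx : x ∈ gamesOf Ω) : x.valid := by
  obtain ⟨g, hg, rfl⟩ := mem_gamesOf hx
  exact ⟨_, _, rfl, hΩ.men_ne g hg, hΩ.women_ne g hg⟩

end Counting

theorem partners_or_opposesMW {m w : Fin N} {x : Game N} (hm : x.manIn m) (hw : x.womanIn w) :
    x.partners m w ∨ x.opposesMW m w := by
  obtain ⟨a, b, rfl, rfl⟩ := hm
  obtain ⟨c, d, heq, rfl⟩ := hw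
  rcases Sym2.eq_iff.1 heq with ⟨rfl, rfl⟩ | ⟨rfl, rfl⟩
  exacts [.inl (Sym2.mem_mk_left _ _), .inr ⟨_, _, rfl, rfl, rfl⟩]

theorem sum_countP_manIn {r : Multiset (Game N)} (hr : ∀ x ∈ r, x.valid) :
    ∑ m, r.countP (Game.manIn m) = 2 * r.card := by
  induction r using Multiset.induction_on with
  | empty => simp
  | cons x r ih =>
    obtain ⟨a, b, rfl, hab, -⟩ := hr _ (Multiset.mem_cons_self _ _)
    have hmen (m : Fin N) : Game.manIn m s(a, b) ↔ m ∈ ({a.1, b.1} : Finset (Fin N)) := by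
      simp only [Game.manIn, Sym2.eq_iff, Finset.mem_insert, Finset.mem_singleton]
      grind
    simp only [Multiset.countP_cons, Finset.sum_add_distrib, hmen, Finset.sum_boole,
      Finset.filter_mem_eq_inter, Finset.univ_inter, Finset.card_pair hab, Multiset.card_cons,
      ih fun x hx => hr x (Multiset.mem_cons_of_mem hx), Nat.cast_ofNat, mul_add, mul_one]

end Schedules

section HoleFilling

open ScheduledGame

variable {X K W : Type*} (e : X ≃ K × W)

theorem ScheduledGame.map_injective {Y : Type*} {f : X → Y} (hf : Function.Injective f) :
    Function.Injective (ScheduledGame.map f) := by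
  intro g g' h
  simp only [ScheduledGame.map, ScheduledGame.mk.injEq, hf.eq_iff] at h
  exact ScheduledGame.ext h.1 h.2.1 h.2.2.1 h.2.2.2.1 h.2.2.2.2

/-- Copies of the games of `ℓ` in each of the holes `{x | (e x).1 = h}`. -/
def spread (ℓ : Set (ScheduledGame W)) : Set (ScheduledGame X) :=
  {g | ∃ h, ∃ l ∈ ℓ, l.map (fun i => e.symm (h, i)) = g}

theorem ncard_spread {ℓ : Set (ScheduledGame W)} {Q : ScheduledGame X → Prop}
    {Q' : ScheduledGame W → Prop} (h₀ : K)
    (hQ : ∀ h l, Q (l.map fun i => e.symm (h, i)) ↔ h = h₀ ∧ Q' l) :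
    {g ∈ spread e ℓ | Q g}.ncard = {l ∈ ℓ | Q' l}.ncard := by
  have himage : {g ∈ spread e ℓ | Q g} =
      ScheduledGame.map (fun i => e.symm (h₀, i)) '' {l ∈ ℓ | Q' l} := by
    ext g
    constructor
    · rintro ⟨⟨h, l, hl, rfl⟩, hQl⟩
      obtain ⟨rfl, hQ'⟩ := (hQ h l).1 hQl
      exact ⟨l, ⟨hl, hQ'⟩, rfl⟩
    · rintro ⟨l, ⟨hl, hQ'⟩, rfl⟩
      exact ⟨⟨h₀, l, hl, rfl⟩, (hQ h₀ l).2 ⟨rfl, hQ'⟩⟩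
  rw [himage, Set.ncard_image_of_injective _ (map_injective fun i j hij =>
    congrArg Prod.snd (e.symm.injective hij))]

theorem pairing_spread {ℓ : Set (ScheduledGame W)} {g : ScheduledGame X} (hg : g ∈ spread e ℓ)
    (k : Fin 6) : (e (pairing k g).1).1 = (e (pairing k g).2).1 := by
  obtain ⟨h, l, -, rfl⟩ := hg
  simp only [pairing_map, Prod.map, Equiv.apply_symm_apply]

theorem spread_union (ℓ ℓ' : Set (ScheduledGame W)) :
    spread e (ℓ ∪ ℓ') = spread e ℓ ∪ spread e ℓ' := by
  ext g
  simp only [spread, Set.mem_union, Set.mem_ofPred_eq, or_and_right, exists_or]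

theorem disjoint_spread {ℓ ℓ' : Set (ScheduledGame W)} (h : Disjoint ℓ ℓ') :
    Disjoint (spread e ℓ) (spread e ℓ') := by
  rw [Set.disjoint_left] at h ⊢
  rintro _ ⟨c, l, hl, rfl⟩ ⟨c', l', hl', heq⟩
  obtain rfl : c' = c := by
    simpa only [ScheduledGame.map, e.apply_symm_apply] using congrArg (fun g => (e g.man₁).1) heq
  exact h hl (map_injective (fun i j hij => congrArg Prod.snd (e.symm.injective hij)) heq ▸ hl')

theorem IsSchedule.spread {ℓ : Set (ScheduledGame W)} (hℓ : IsSchedule ℓ) :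
    IsSchedule (spread e ℓ) where
  swap_mem := by
    rintro _ ⟨h, l, hl, rfl⟩
    exact ⟨h, l.swap, hℓ.swap_mem l hl, rfl⟩
  men_ne := by
    rintro _ ⟨h, l, hl, rfl⟩ heq
    exact hℓ.men_ne l hl (congrArg Prod.snd (e.symm.injective heq))
  women_ne := by
    rintro _ ⟨h, l, hl, rfl⟩ heq
    exact hℓ.women_ne l hl (congrArg Prod.snd (e.symm.injective heq))

theorem IsSchedule.union {Ω Ω' : Set (ScheduledGame X)} (h : IsSchedule Ω) (h' : IsSchedule Ω') :
    IsSchedule (Ω ∪ Ω') where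
  swap_mem g hg := hg.imp (h.swap_mem g) (h'.swap_mem g)
  men_ne g hg := hg.elim (h.men_ne g) (h'.men_ne g)
  women_ne g hg := hg.elim (h.women_ne g) (h'.women_ne g)

theorem IsFrame.isSchedule {R : X → X → Prop} {O : Set (ScheduledGame X)} (hO : IsFrame R O)
    (hR : ∀ x, ¬ R x x) : IsSchedule O where
  swap_mem := hO.swap_mem
  men_ne g hg heq := by
    have hpair : R g.man₁ g.man₂ := (hO.bijOn_pairing 0).mapsTo hg
    exact hR _ (heq ▸ hpair)
  women_ne g hg heq := by
    have hpair : R g.woman₁ g.woman₂ := (hO.bijOn_pairing 3).mapsTo hg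
    exact hR _ (heq ▸ hpair)

variable {e}

theorem encounters_union_spread {O : Set (ScheduledGame X)} {ℓ : Set (ScheduledGame W)}
    (hO : IsFrame (fun x y => (e x).1 ≠ (e y).1) O) (k : Fin 6) (x y : X) :
    encounters (O ∪ spread e ℓ) k (x, y) =
      if (e x).1 = (e y).1 then encounters ℓ k ((e x).2, (e y).2) else 1 := by
  split_ifs with hxy
  · have hspread : {g ∈ O ∪ spread e ℓ | pairing k g = (x, y)} =
        {g ∈ spread e ℓ | pairing k g = (x, y)} := by
      refine Set.Subset.antisymm (fun g hg => ⟨hg.1.resolve_left fun hgO => ?_, hg.2⟩)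
        fun g hg => ⟨.inr hg.1, hg.2⟩
      have hne := (hO.bijOn_pairing k).mapsTo hgO
      rw [hg.2] at hne
      exact hne hxy
    rw [encounters, encounters, hspread, ncard_spread e (e x).1]
    intro h l
    simp only [pairing_map, Prod.map, Equiv.symm_apply_eq, Prod.ext_iff, ← hxy]
    tauto
  · obtain ⟨g, hg, hpair⟩ := (hO.bijOn_pairing k).surjOn (a := (x, y)) hxy
    refine Set.ncard_eq_one.2 ⟨g, Set.eq_singleton_iff_unique_mem.2
      ⟨⟨.inl hg, hpair⟩, fun g' hg' => ?_⟩⟩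
    rcases hg'.1 with hO' | hspread
    · exact (hO.bijOn_pairing k).injOn hO' hg (hg'.2.trans hpair.symm)
    · have heq := pairing_spread e hspread k
      rw [hg'.2] at heq
      exact (hxy heq).elim

end HoleFilling

section FilledFrame

open ScheduledGame

variable {N n : ℕ}

/-- Three of the four games of a CMDRR(3,1) with spouse pair `(0, 0)`, one in each of the rounds
`0, 1, 2`. The men having byes are `2, 1, 0`, the women `0, 0, 1`. -/
def localFull : Finset (ScheduledGame (Fin 3)) :=
  (withSwaps [⟨0, 1, 1, 2, 0⟩, ⟨0, 2, 2, 1, 1⟩, ⟨1, 2, 0, 2, 2⟩]).toFinset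

/-- The fourth game of the CMDRR(3,1), to be played in the short round; its label `0` for the round
is a dummy value. -/
def localShort : Finset (ScheduledGame (Fin 3)) :=
  (withSwaps [⟨1, 2, 1, 0, 0⟩]).toFinset

theorem isSchedule_localFull : IsSchedule (localFull : Set (ScheduledGame (Fin 3))) :=
  isSchedule_coe (by decide)

theorem isSchedule_localShort : IsSchedule (localShort : Set (ScheduledGame (Fin 3))) :=
  isSchedule_coe (by decide)

/-- A CMDRR(3,1), the tournament played inside each hole. -/
def localGames : Finset (ScheduledGame (Fin 3)) := localFull ∪ localShort

theorem isSchedule_localGames : IsSchedule (localGames : Set (ScheduledGame (Fin 3))) :=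
  isSchedule_coe (by decide)

theorem encounters_localGames_man_woman {k : Fin 6} (hk : k = 1 ∨ k = 2) (i j : Fin 3) :
    encounters (localGames : Set (ScheduledGame (Fin 3))) k (i, j) =
      if i = j ∧ i = 0 then 0 else 1 := by
  rw [encounters_coe]
  decide +revert

theorem encounters_localGames_same_sex {k : Fin 6} (hk : k = 0 ∨ k = 3) {i j : Fin 3}
    (hij : i ≠ j) :
    encounters (localGames : Set (ScheduledGame (Fin 3))) k (i, j) = if j = -i then 2 else 1 := by
  rw [encounters_coe]
  decide +revert

theorem encounters_localFull_man_round (i r : Fin 3) :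
    encounters (localFull : Set (ScheduledGame (Fin 3))) 4 (i, r) =
      if i = ![2, 1, 0] r then 0 else 1 := by
  rw [encounters_coe]
  decide +revert

theorem encounters_localFull_woman_round (i r : Fin 3) :
    encounters (localFull : Set (ScheduledGame (Fin 3))) 5 (i, r) =
      if i = ![0, 0, 1] r then 0 else 1 := by
  rw [encounters_coe]
  decide +revert

variable (e : Fin N ≃ Fin n × Fin 3)

/-- The spouse pairs: the couple `0` of each hole. -/
def spousePairs : Finset (Fin N × Fin N) :=
  Finset.univ.image fun h => (e.symm (h, 0), e.symm (h, 0))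

theorem mem_spousePairs {p : Fin N × Fin N} :
    p ∈ spousePairs e ↔ p.1 = p.2 ∧ (e p.1).2 = 0 := by
  simp only [spousePairs, Finset.mem_image, Finset.mem_univ, true_and]
  constructor
  · rintro ⟨h, rfl⟩
    exact ⟨rfl, by rw [e.apply_symm_apply]⟩
  · rintro ⟨hp, h0⟩
    exact ⟨(e p.1).1, Prod.ext (by simp [← h0]) (by simp [← h0, hp])⟩

theorem mem_image_fst_spousePairs {m : Fin N} :
    m ∈ (spousePairs e).image Prod.fst ↔ (e m).2 = 0 := by
  simp [mem_spousePairs]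

theorem mem_image_snd_spousePairs {w : Fin N} :
    w ∈ (spousePairs e).image Prod.snd ↔ (e w).2 = 0 := by
  simp [mem_spousePairs]

theorem card_spousePairs : (spousePairs e).card = n := by
  rw [spousePairs, Finset.card_image_of_injective, Finset.card_fin]
  intro h h' heq
  simpa using heq

/-- The full round `x`: the games of the frame in that round, and the game of `localFull` played in
it by the players of the hole of `x`. -/
noncomputable def frameRound (O : Set (ScheduledGame (Fin N))) (x : Fin N) : Multiset (Game N) :=
  gamesOf {g ∈ O ∪ spread e localFull | g.round = x}

/-- The short round: one game in each hole. -/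
noncomputable def shortRound : Multiset (Game N) :=
  gamesOf (spread e localShort)

variable {e}

theorem countP_manIn_shortRound (m : Fin N) :
    (shortRound e).countP (Game.manIn m) = if (e m).2 = 0 then 0 else 1 := by
  have hcount : ∀ i : Fin 3, (localShort.filter (·.man₁ = i)).card = if i = 0 then 0 else 1 := by
    decide
  rw [shortRound, countP_manIn (isSchedule_localShort.spread e), ncard_spread e (e m).1
    (Q' := fun l => l.man₁ = (e m).2), ← hcount, ← Set.ncard_coe_finset, Finset.coe_filter]
  · rfl
  · intro h l
    simp only [ScheduledGame.map, e.symm_apply_eq, Prod.ext_iff]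

theorem countP_womanIn_shortRound (w : Fin N) :
    (shortRound e).countP (Game.womanIn w) = if (e w).2 = 2 then 0 else 1 := by
  have hcount : ∀ i : Fin 3,
      (localShort.filter (·.woman₁ = i)).card = if i = 2 then 0 else 1 := by
    decide
  rw [shortRound, countP_womanIn (isSchedule_localShort.spread e), ncard_spread e (e w).1
    (Q' := fun l => l.woman₁ = (e w).2), ← hcount, ← Set.ncard_coe_finset, Finset.coe_filter]
  · rfl
  · intro h l
    simp only [ScheduledGame.map, e.symm_apply_eq, Prod.ext_iff]

theorem isRound_shortRound : IsRound (shortRound e) := by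
  refine ⟨fun m => ?_, fun w => ?_⟩
  · rw [countP_manIn_shortRound]
    exact ite_le_one zero_le_one le_rfl
  · rw [countP_womanIn_shortRound]
    exact ite_le_one zero_le_one le_rfl

theorem card_shortRound : (shortRound e).card = n := by
  have hsum : 2 * (shortRound e).card = 2 * n := by
    rw [← sum_countP_manIn (r := shortRound e) fun x => valid_of_mem_gamesOf
      (isSchedule_localShort.spread e)]
    simp only [countP_manIn_shortRound]
    rw [e.sum_comp fun p => if p.2 = 0 then 0 else 1, Fintype.sum_prod_type]
    simp [Fin.sum_univ_three, mul_comm]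
  omega

theorem not_fullRound_shortRound (hn : 2 ≤ n) : ¬ FullRound (shortRound e) := by
  have hbye (h : Fin n) : (shortRound e).countP (Game.manIn (e.symm (h, 0))) = 0 := by
    rw [countP_manIn_shortRound, e.apply_symm_apply, if_pos rfl]
  rintro ⟨-, ⟨-, hall, -⟩ | ⟨-, hunique, -⟩⟩
  · exact absurd (hall _) (by rw [hbye ⟨0, by omega⟩]; exact zero_ne_one)
  · have heq := hunique.unique (hbye ⟨0, by omega⟩) (hbye ⟨1, by omega⟩)
    simp at heq

variable {O : Set (ScheduledGame (Fin N))} (hO : IsFrame (fun x y => (e x).1 ≠ (e y).1) O)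
include hO

theorem isSchedule_union_spread {ℓ : Set (ScheduledGame (Fin 3))} (hℓ : IsSchedule ℓ) :
    IsSchedule (O ∪ spread e ℓ) :=
  (hO.isSchedule fun _ h => h rfl).union (hℓ.spread e)

theorem encounters_man_woman {k : Fin 6} (hk : k = 1 ∨ k = 2) (x y : Fin N) :
    encounters (O ∪ spread e localGames) k (x, y) = if (x, y) ∈ spousePairs e then 0 else 1 := by
  rw [encounters_union_spread hO, encounters_localGames_man_woman hk]
  simp only [mem_spousePairs, ← e.injective.eq_iff (a := x), Prod.ext_iff]
  split_ifs <;> tauto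

theorem encounters_same_sex {k : Fin 6} (hk : k = 0 ∨ k = 3) {x y : Fin N} (hxy : y ≠ x) :
    encounters (O ∪ spread e localGames) k (x, y) =
      if e y = ((e x).1, -(e x).2) then 2 else 1 := by
  rw [encounters_union_spread hO]
  by_cases hhole : (e x).1 = (e y).1
  · have hne : (e x).2 ≠ (e y).2 := fun h => hxy (e.injective (Prod.ext hhole h)).symm
    simp only [hhole, encounters_localGames_same_sex hk hne, Prod.ext_iff, if_true, true_and]
  · rw [if_neg hhole, if_neg fun h : e y = ((e x).1, -(e x).2) =>
      hhole (congrArg Prod.fst h).symm]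

theorem encounters_spoused {k : Fin 6} (hk : k = 0 ∨ k = 3) {x y : Fin N} (hx : (e x).2 = 0)
    (hxy : y ≠ x) : encounters (O ∪ spread e localGames) k (x, y) = 1 := by
  rw [encounters_same_sex hO hk hxy, if_neg]
  rw [hx, neg_zero, ← hx]
  exact fun h => hxy (e.injective h)

theorem encounters_unspoused {k : Fin 6} (hk : k = 0 ∨ k = 3) {x : Fin N} (hx : (e x).2 ≠ 0) :
    ∃ y, y ≠ x ∧ (e y).2 ≠ 0 ∧ encounters (O ∪ spread e localGames) k (x, y) = 2 ∧
      ∀ z, z ≠ x → z ≠ y → encounters (O ∪ spread e localGames) k (x, z) = 1 := by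
  have hneg : ∀ i : Fin 3, i ≠ 0 → -i ≠ i ∧ -i ≠ 0 := by decide
  obtain ⟨hne, hne0⟩ := hneg _ hx
  have hy : e.symm ((e x).1, -(e x).2) ≠ x := fun h =>
    hne (congrArg Prod.snd (e.symm_apply_eq.1 h))
  refine ⟨_, hy, by rwa [e.apply_symm_apply], ?_, fun z hz hzy => ?_⟩
  · rw [encounters_same_sex hO hk hy, if_pos (e.apply_symm_apply _)]
  · rw [encounters_same_sex hO hk hz, if_neg fun h => hzy (e.eq_symm_apply.2 h)]

theorem not_manIn_and_womanIn {x : Game N} (hx : x ∈ gamesOf (O ∪ spread e localGames))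
    {p : Fin N × Fin N} (hp : p ∈ spousePairs e) : ¬ (x.manIn p.1 ∧ x.womanIn p.2) := by
  have hΩ := isSchedule_union_spread hO isSchedule_localGames
  rintro ⟨hm, hw⟩
  rcases partners_or_opposesMW hm hw with h | h
  · refine Multiset.countP_eq_zero.1 ?_ x hx h
    rw [countP_partners hΩ, encounters_man_woman hO (.inl rfl), if_pos hp]
  · refine Multiset.countP_eq_zero.1 ?_ x hx h
    rw [countP_opposesMW hΩ, encounters_man_woman hO (.inr rfl), if_pos hp]

/-- The tournament whose games are those of a frame with holes of size three, together with a
CMDRR(3,1) in each hole. -/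
noncomputable def tournament : CMDRR N n :=
  have hΩ := isSchedule_union_spread hO isSchedule_localGames
  { spouses := spousePairs e
    spouses_card := card_spousePairs e
    spouses_inj1 := fun p hp q hq h => by
      rw [mem_spousePairs] at hp hq
      exact Prod.ext h (hp.1.symm.trans (h.trans hq.1))
    spouses_inj2 := fun p hp q hq h => by
      rw [mem_spousePairs] at hp hq
      exact Prod.ext (hp.1.trans (h.trans hq.1.symm)) h
    games := gamesOf (O ∪ spread e localGames)
    valid := fun _ hx => valid_of_mem_gamesOf hΩ hx
    no_spouse_game := fun _ hx _ hp => not_manIn_and_womanIn hO hx hp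
    partners_once := fun m w hp => by
      rw [countP_partners hΩ, encounters_man_woman hO (.inl rfl), if_neg hp]
    opposesMW_once := fun m w hp => by
      rw [countP_opposesMW hΩ, encounters_man_woman hO (.inr rfl), if_neg hp]
    spousedM_opposes := fun m hm m' hne => by
      rw [countP_opposesMM hΩ]
      exact encounters_spoused hO (.inl rfl) ((mem_image_fst_spousePairs e).1 hm) hne
    spousedW_opposes := fun w hw w' hne => by
      rw [countP_opposesWW hΩ]
      exact encounters_spoused hO (.inr rfl) ((mem_image_snd_spousePairs e).1 hw) hne
    unspousedM_opposes := by
      simp only [countP_opposesMM hΩ, mem_image_fst_spousePairs]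
      exact fun m hm => encounters_unspoused hO (.inl rfl) hm
    unspousedW_opposes := by
      simp only [countP_opposesWW hΩ, mem_image_snd_spousePairs]
      exact fun w hw => encounters_unspoused hO (.inr rfl) hw }

theorem sum_frameRound_add_shortRound :
    ∑ x, frameRound e O x + shortRound e =
      gamesOf (O ∪ spread e localGames) := by
  have hdisj : Disjoint (O ∪ spread e localFull) (spread e localShort) := by
    refine Set.disjoint_union_left.2 ⟨Set.disjoint_left.2 fun g hg hg' => ?_, ?_⟩
    · exact (hO.bijOn_pairing 0).mapsTo hg (pairing_spread e hg' 0)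
    · exact disjoint_spread e (Finset.disjoint_coe.2 (by decide))
  have hgames : O ∪ spread e localGames = O ∪ spread e localFull ∪ spread e localShort := by
    rw [localGames, Finset.coe_union, spread_union, Set.union_assoc]
  rw [hgames, gamesOf_union hdisj, gamesOf_eq_sum_rounds (O ∪ _)]
  rfl

theorem countP_manIn_frameRound (m x : Fin N) :
    (frameRound e O x).countP (Game.manIn m) =
      if m = e.symm ((e x).1, ![2, 1, 0] (e x).2) then 0 else 1 := by
  rw [frameRound, countP_manIn_round (isSchedule_union_spread hO isSchedule_localFull),
    encounters_union_spread hO, encounters_localFull_man_round]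
  simp only [e.eq_symm_apply, Prod.ext_iff]
  split_ifs <;> tauto

theorem countP_womanIn_frameRound (w x : Fin N) :
    (frameRound e O x).countP (Game.womanIn w) =
      if w = e.symm ((e x).1, ![0, 0, 1] (e x).2) then 0 else 1 := by
  rw [frameRound, countP_womanIn_round (isSchedule_union_spread hO isSchedule_localFull),
    encounters_union_spread hO, encounters_localFull_woman_round]
  simp only [e.eq_symm_apply, Prod.ext_iff]
  split_ifs <;> tauto

theorem fullRound_frameRound (hN : Odd N) (x : Fin N) : FullRound (frameRound e O x) := by
  refine ⟨⟨fun m => ?_, fun w => ?_⟩, .inr ⟨Nat.not_even_iff_odd.2 hN, ?_, ?_⟩⟩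
  · rw [countP_manIn_frameRound hO]
    exact ite_le_one zero_le_one le_rfl
  · rw [countP_womanIn_frameRound hO]
    exact ite_le_one zero_le_one le_rfl
  · simp [countP_manIn_frameRound hO]
  · simp [countP_womanIn_frameRound hO]

theorem card_frameRound (x : Fin N) : (frameRound e O x).card = (N - 1) / 2 := by
  have hvalid : ∀ g ∈ frameRound e O x, g.valid := fun g => valid_of_mem_gamesOf
    ((isSchedule_union_spread hO isSchedule_localFull).sep_round x)
  have hsum : 2 * (frameRound e O x).card = N - 1 := by
    rw [← sum_countP_manIn hvalid]
    simp only [countP_manIn_frameRound hO, Finset.sum_ite, Finset.sum_const, smul_eq_mul,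
      mul_zero, zero_add, mul_one]
    rw [Finset.filter_ne', Finset.card_erase_of_mem (Finset.mem_univ _), Finset.card_fin]
  omega

end FilledFrame

/-- For every odd `n ≥ 5` there is a fully resolvable CMDRR(3n, n): `3n` full
rounds of `(3n - 1)/2` games each (each giving byes to exactly one man and one
woman), plus one short round of `n` games. -/
theorem cmdrr_3n_n_fully_resolvable (n : ℕ) (hn : 5 ≤ n) (hodd : Odd n) :
    ∃ T : CMDRR (3 * n) n,
      ∃ fulls : Multiset (Multiset (Game (3 * n))), ∃ short : Multiset (Game (3 * n)),
        fulls.sum + short = T.games ∧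
        Multiset.card fulls = 3 * n ∧
        (∀ r ∈ fulls, FullRound r ∧ Multiset.card r = (3 * n - 1) / 2) ∧
        IsRound short ∧ ¬ FullRound short ∧ Multiset.card short = n := by
  obtain ⟨N, rfl⟩ := hodd
  let e : Fin (3 * (2 * N + 1)) ≃ Fin (2 * N + 1) × Fin 3 :=
    (finCongr (mul_comm _ _)).trans finProdFinEquiv.symm
  obtain ⟨O, hO⟩ : HasFrame (fun x y => (e x).1 ≠ (e y).1) :=
    (frameOfType_three N (by omega)).transport e.symm fun a b => by
      simp only [e.apply_symm_apply]
  have hodd : Odd (3 * (2 * N + 1)) := (by decide : Odd 3).mul (odd_two_mul_add_one N)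
  refine ⟨tournament hO, Finset.univ.val.map (frameRound e O), shortRound e,
    sum_frameRound_add_shortRound hO, ?_, ?_, isRound_shortRound,
    not_fullRound_shortRound (by omega), card_shortRound⟩
  · rw [Multiset.card_map, Finset.card_val, Finset.card_fin]
  · simp only [Multiset.forall_mem_map_iff]
    exact fun x _ => ⟨fullRound_frameRound hO hodd x, card_frameRound hO x⟩
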